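/- arXiv:2509.03048 — 2 statements merged into one kernel-verified Lean document; each statement's English description precedes it below -/
import Mathlib

section
/- For the elephant random walk with memory parameter p ∈ [0, 1) on a Cayley graph that is the d-regular tree T_d (d ≥ 3), the normalized distance from the root converges almost surely: Δ_n / n → (d − 2)/d as n → ∞. -/
open MeasureTheory ProbabilityTheory Filter

noncomputable section

/-- The Cayley graph of a group with respect to a finite set of generators. -/
def cayleyGraph {G : Type*} [Group G] (S : Finset G) : SimpleGraph G where
  Adj x y := x ≠ y ∧ (y * x⁻¹ ∈ S ∨ x * y⁻¹ ∈ S)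
  symm := by
    constructor
    rintro x y ⟨h1, h2⟩
    refine ⟨h1.symm, ?_⟩
    rcases h2 with h | h
    · exact Or.inr h
    · exact Or.inl h
  loopless := ⟨fun x h => h.1 rfl⟩

/-- The elephant random walk (ERW) with memory parameter `p` on the Cayley graph of a
group `G` with respect to a symmetric generating set `S` of cardinality `d`, not
containing the identity, whose Cayley graph is a tree (hence the `d`-regular tree
`T_d`).  The steps are `g 1, g 2, …` (the value of `g 0` is irrelevant).  The law of
the process is characterised by: `g 1` is uniform on `S`, and, conditionally on the
first `n` steps being `s 1, …, s n`, the next step `g (n+1)` equals `a ∈ S` with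
probability `p * N/n + ((1-p)/(d-1)) * (n-N)/n`, where `N = #{1 ≤ k ≤ n : s k = a}`;
this is precisely the probability that the walker, recalling a uniform past epoch
`D ∈ {1, …, n}`, repeats `g D` with probability `p` and takes any given other step
with probability `(1-p)/(d-1)`. -/
structure ERW (G : Type*) [Group G] [DecidableEq G] (d : ℕ) (p : ℝ)
    (Ω : Type*) [MeasurableSpace Ω] (P : Measure Ω) where
  S : Finset G
  card_S : S.card = d
  symm_S : ∀ s ∈ S, s⁻¹ ∈ S
  one_not_mem : (1 : G) ∉ S
  tree : (cayleyGraph S).IsTree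
  g : ℕ → Ω → G
  meas_g : ∀ n a, MeasurableSet {ω | g n ω = a}
  mem_S : ∀ n, 1 ≤ n → ∀ ω, g n ω ∈ S
  init : ∀ a ∈ S, (P {ω | g 1 ω = a}).toReal = 1 / d
  update : ∀ n, 1 ≤ n → ∀ s : ℕ → G, ∀ a ∈ S,
    (P ({ω | ∀ k ∈ Finset.Icc 1 n, g k ω = s k} ∩ {ω | g (n + 1) ω = a})).toReal
      = (p * ((((Finset.Icc 1 n).filter fun k => s k = a).card : ℝ) / n)
          + (1 - p) / ((d : ℝ) - 1)
            * (((n : ℝ) - (((Finset.Icc 1 n).filter fun k => s k = a).card : ℝ)) / n))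
        * (P {ω | ∀ k ∈ Finset.Icc 1 n, g k ω = s k}).toReal

namespace ERW

variable {G : Type*} [Group G] [DecidableEq G] {d : ℕ} {p : ℝ}
  {Ω : Type*} [MeasurableSpace Ω] {P : Measure Ω}

/-- The position `w n = g n ⋯ g 1` of the walk at time `n`. -/
def pos (E : ERW G d p Ω P) : ℕ → Ω → G
  | 0 => fun _ => 1
  | n + 1 => fun ω => E.g (n + 1) ω * E.pos n ω

/-- `Δ n`: the (word-metric) distance of the walker from the root at time `n`. -/
def dist (E : ERW G d p Ω P) (n : ℕ) (ω : Ω) : ℕ :=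
  (cayleyGraph E.S).dist 1 (E.pos n ω)

/-- `N n a`: the number of `a`-steps taken by time `n`. -/
def count (E : ERW G d p Ω P) (a : G) (n : ℕ) (ω : Ω) : ℕ :=
  ((Finset.Icc 1 n).filter fun k => E.g k ω = a).card

/-- `γ n`: the unique step decreasing the distance to the root by 1
(a junk value if the walker is at the root). -/
def gammaStep (E : ERW G d p Ω P) (n : ℕ) (ω : Ω) : G :=
  @Classical.epsilon G ⟨1⟩ fun s =>
    s ∈ E.S ∧ (cayleyGraph E.S).dist 1 (s * E.pos n ω) + 1 = E.dist n ω

/-- `ℓ n = N n (γ n)` if the walker is away from the root, and `0` otherwise. -/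
def ell (E : ERW G d p Ω P) (n : ℕ) (ω : Ω) : ℕ :=
  if E.pos n ω = 1 then 0 else E.count (E.gammaStep n ω) n ω

/-- `Ξ n = (1/n) ∑_{k=0}^{n-1} (ℓ k / k - 1(Δ k > 0)/d)` (with the convention
`ℓ 0 / 0 = 0`, automatic since division by zero yields zero). -/
def Xi (E : ERW G d p Ω P) (n : ℕ) (ω : Ω) : ℝ :=
  (1 / n) * ∑ k ∈ Finset.range n,
    ((E.ell k ω : ℝ) / k - (if 0 < E.dist k ω then 1 else 0) / d)

/-- The natural filtration `F n` generated by the steps up to time `n`. -/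
def filt (E : ERW G d p Ω P) (n : ℕ) : MeasurableSpace Ω :=
  ⨆ k ∈ Finset.Icc 1 n, MeasurableSpace.comap (E.g k) ⊤

/-- `G n = E[Δ (n+1) - Δ n | F n]`. -/
def drift (E : ERW G d p Ω P) (n : ℕ) : Ω → ℝ :=
  P[fun ω => ((E.dist (n + 1) ω : ℝ) - (E.dist n ω : ℝ)) | E.filt n]

/-- The martingale differences `Y k = Δ k - Δ (k-1) - G (k-1)`. -/
def mdiff (E : ERW G d p Ω P) (k : ℕ) (ω : Ω) : ℝ :=
  (E.dist k ω : ℝ) - (E.dist (k - 1) ω : ℝ) - E.drift (k - 1) ω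

/-- The martingale `M n = ∑_{k=1}^n Y k`. -/
def mart (E : ERW G d p Ω P) (n : ℕ) (ω : Ω) : ℝ :=
  ∑ k ∈ Finset.Icc 1 n, E.mdiff k ω

end ERW

/-- The rate `r n`: `√n` in the subcritical regime `p < p_d = (d+1)/(2d)`,
`√(n / log n)` in the critical regime `p = p_d`, and `n ^ (d(1-p)/(d-1))` in the
supercritical regime `p > p_d`. -/
def rate (p : ℝ) (d : ℕ) (n : ℕ) : ℝ :=
  if p < ((d : ℝ) + 1) / (2 * d) then Real.sqrt n
  else if p = ((d : ℝ) + 1) / (2 * d) then Real.sqrt ((n : ℝ) / Real.log n)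
  else (n : ℝ) ^ ((d : ℝ) * (1 - p) / ((d : ℝ) - 1))



lemma erwaux_slln {Ω : Type*} [MeasurableSpace Ω] {P : Measure Ω} [IsProbabilityMeasure P]
    (Y : ℕ → Ω → ℝ) (hm : ∀ n, Measurable (Y n)) (C : ℝ) (hC : ∀ n ω, |Y n ω| ≤ C)
    (horth : ∀ n, ∫ ω, (∑ k ∈ Finset.range n, Y k ω) * Y n ω ∂P = 0) :
    ∀ᵐ ω ∂P, Tendsto (fun n : ℕ => (∑ k ∈ Finset.range n, Y k ω) / n) atTop (nhds 0) := by
  have hMm : ∀ n, Measurable (fun ω => ∑ k ∈ Finset.range n, Y k ω) := fun n =>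
    Finset.measurable_sum _ (fun k _ => hm k)
  have hMb : ∀ n ω, |∑ k ∈ Finset.range n, Y k ω| ≤ n * C := by
    intro n ω
    refine (Finset.abs_sum_le_sum_abs _ _).trans ?_
    refine (Finset.sum_le_sum (fun k _ => hC k ω)).trans ?_
    simp
  have hint : ∀ f : Ω → ℝ, Measurable f → ∀ B : ℝ, (∀ ω, |f ω| ≤ B) → Integrable f P := by
    intro f hf B hB
    exact Integrable.of_bound hf.aestronglyMeasurable B (Eventually.of_forall hB)
  have hi1 : ∀ n, Integrable (fun ω => (∑ k ∈ Finset.range n, Y k ω) ^ 2) P := by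
    intro n
    refine hint _ ((hMm n).pow_const 2) ((n * C) ^ 2) ?_
    intro ω
    rw [abs_pow]
    exact pow_le_pow_left₀ (abs_nonneg _) (hMb n ω) 2
  have hi2 : ∀ n, Integrable (fun ω => (∑ k ∈ Finset.range n, Y k ω) * Y n ω) P := by
    intro n
    refine hint _ ((hMm n).mul (hm n)) ((n * C) * C) ?_
    intro ω
    rw [abs_mul]
    exact mul_le_mul (hMb n ω) (hC n ω) (abs_nonneg _) ((abs_nonneg _).trans (hMb n ω))
  have hi3 : ∀ n, Integrable (fun ω => (Y n ω) ^ 2) P := by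
    intro n
    refine hint _ ((hm n).pow_const 2) (C ^ 2) ?_
    intro ω
    rw [abs_pow]
    exact pow_le_pow_left₀ (abs_nonneg _) (hC n ω) 2
  have hvar : ∀ n : ℕ, ∫ ω, (∑ k ∈ Finset.range n, Y k ω) ^ 2 ∂P ≤ n * C ^ 2 := by
    intro n
    induction n with
    | zero => simp
    | succ n ih =>
      have h1 : ∀ ω, (∑ k ∈ Finset.range (n + 1), Y k ω) ^ 2
          = (∑ k ∈ Finset.range n, Y k ω) ^ 2 + 2 * ((∑ k ∈ Finset.range n, Y k ω) * Y n ω)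
            + (Y n ω) ^ 2 := by
        intro ω
        rw [Finset.sum_range_succ]; ring
      simp_rw [h1]
      have hadd : Integrable (fun ω => (∑ k ∈ Finset.range n, Y k ω) ^ 2
          + 2 * ((∑ k ∈ Finset.range n, Y k ω) * Y n ω)) P := (hi1 n).add ((hi2 n).const_mul 2)
      rw [integral_add hadd (hi3 n),
        integral_add (hi1 n) ((hi2 n).const_mul 2), integral_const_mul, horth n]
      have h2 : ∫ ω, (Y n ω) ^ 2 ∂P ≤ C ^ 2 := by
        have : ∫ ω, (Y n ω) ^ 2 ∂P ≤ ∫ ω, C ^ 2 ∂P := by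
          refine integral_mono (hi3 n) (integrable_const _) ?_
          intro ω
          exact sq_le_sq.2 ((hC n ω).trans (le_abs_self C))
        simpa using this
      push_cast
      linarith
  -- a.s. convergence along squares
  have hsq : ∀ᵐ ω ∂P, Tendsto (fun k : ℕ => (∑ j ∈ Finset.range ((k + 1) ^ 2), Y j ω) / (((k + 1) ^ 2 : ℕ) : ℝ))
      atTop (nhds 0) := by
    set Z : ℕ → Ω → ℝ := fun k ω => ((∑ j ∈ Finset.range ((k + 1) ^ 2), Y j ω) / (((k + 1) ^ 2 : ℕ) : ℝ)) ^ 2 with hZ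
    have hZm : ∀ k, Measurable (Z k) := fun k => ((hMm _).div_const _).pow_const 2
    have hZl : ∀ k, ∫⁻ ω, ENNReal.ofReal (Z k ω) ∂P ≤ ENNReal.ofReal (C ^ 2 / ((k + 1 : ℕ) : ℝ) ^ 2) := by
      intro k
      have hZi : Integrable (Z k) P := by
        simp only [hZ, div_pow]
        exact (hi1 _).div_const _
      rw [← ofReal_integral_eq_lintegral_ofReal hZi (Eventually.of_forall fun ω => sq_nonneg _)]
      apply ENNReal.ofReal_le_ofReal
      simp only [hZ, div_pow]
      rw [integral_div]
      have := hvar ((k + 1) ^ 2)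
      have hk : (0 : ℝ) < (((k + 1) ^ 2 : ℕ) : ℝ) := by positivity
      rw [div_le_iff₀ (by positivity)]
      refine this.trans (le_of_eq ?_)
      push_cast
      have : (k : ℝ) + 1 ≠ 0 := by positivity
      field_simp
    have hsum : ∫⁻ ω, ∑' k, ENNReal.ofReal (Z k ω) ∂P ≠ ⊤ := by
      rw [lintegral_tsum (fun k => (hZm k).ennreal_ofReal.aemeasurable)]
      refine ne_top_of_le_ne_top ?_ (ENNReal.tsum_le_tsum hZl)
      have hs : Summable (fun k : ℕ => C ^ 2 / ((k + 1 : ℕ) : ℝ) ^ 2) := by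
        have h0 : Summable (fun k : ℕ => C ^ 2 / (k : ℝ) ^ 2) := by
          have := (Real.summable_one_div_nat_pow (p := 2)).2 (by norm_num)
          simpa [div_eq_mul_inv] using this.mul_left (C ^ 2)
        exact (summable_nat_add_iff 1).2 h0
      exact hs.tsum_ofReal_ne_top
    have hae := ae_lt_top' (Measurable.tsum (fun k => (hZm k).ennreal_ofReal)).aemeasurable hsum
    filter_upwards [hae] with ω hω
    have h1 := ENNReal.tendsto_atTop_zero_of_tsum_ne_top hω.ne
    have h2 : Tendsto (fun k => Z k ω) atTop (nhds 0) := by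
      have := (ENNReal.tendsto_toReal ENNReal.zero_ne_top).comp h1
      simpa [Function.comp_def, ENNReal.toReal_ofReal (sq_nonneg _), hZ] using this
    have h3 := h2.sqrt
    simp only [hZ, Real.sqrt_sq_eq_abs, Real.sqrt_zero] at h3
    exact (tendsto_zero_iff_abs_tendsto_zero _).2 h3
  filter_upwards [hsq] with ω hω
  have hmono : Monotone (fun n : ℕ => ∑ k ∈ Finset.range n, Y k ω + C * n) := by
    apply monotone_nat_of_le_succ
    intro n
    rw [Finset.sum_range_succ]
    have := (abs_le.1 (hC n ω)).1
    push_cast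
    linarith
  have key := tendsto_div_of_monotone_of_exists_subseq_tendsto_div _ C hmono ?_
  · have h2 := key.sub_const C
    rw [sub_self] at h2
    refine h2.congr' ?_
    filter_upwards [eventually_gt_atTop 0] with n hn
    have : (n : ℝ) ≠ 0 := by positivity
    field_simp
    ring
  · intro a ha
    refine ⟨fun k => (k + 1) ^ 2, ?_, ?_, ?_⟩
    · have ht : Tendsto (fun k : ℕ => (1 + 1 / ((k : ℝ) + 1)) ^ 2) atTop (nhds ((1 + 0) ^ 2)) :=
        (tendsto_one_div_add_atTop_nhds_zero_nat.const_add 1).pow 2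
      have := ht.eventually (gt_mem_nhds (by simpa using ha) : ∀ᶠ y in nhds (((1 : ℝ) + 0) ^ 2), y < a)
      filter_upwards [this] with k hk
      have hk1 : (0 : ℝ) < (k : ℝ) + 1 := by positivity
      have e : (((k + 1 + 1) ^ 2 : ℕ) : ℝ) = (1 + 1 / ((k : ℝ) + 1)) ^ 2 * (((k + 1) ^ 2 : ℕ) : ℝ) := by
        push_cast
        field_simp
      rw [e]
      gcongr
    · exact (tendsto_pow_atTop (two_ne_zero)).comp (tendsto_add_atTop_nat 1)
    · have h2 := hω.add_const C
      rw [zero_add] at h2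
      refine h2.congr ?_
      intro k
      have : (((k + 1) ^ 2 : ℕ) : ℝ) ≠ 0 := by positivity
      field_simp

lemma erwaux_contract (x e : ℕ → ℝ) (α B : ℝ) (hα : |α| < 1) (hB : ∀ n, |x n| ≤ B)
    (he : Tendsto e atTop (nhds 0))
    (hx : ∀ᶠ n in atTop, x n = e n + α * ((∑ k ∈ Finset.range n, x k) / n)) :
    Tendsto x atTop (nhds 0) := by
  set r := (1 + |α|) / 2 with hr
  have hr0 : 0 ≤ r := by positivity
  have hr1 : r < 1 := by rw [hr]; linarith
  have hstep : ∀ b : ℝ, 0 < b → (∀ᶠ n in atTop, |x n| ≤ b) → ∀ᶠ n in atTop, |x n| ≤ r * b := by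
    intro b hb h
    have hy : Tendsto (fun k => max |x k| b) atTop (nhds b) := by
      refine tendsto_const_nhds.congr' ?_
      filter_upwards [h] with n hn
      rw [max_eq_right hn]
    have hc := hy.cesaro
    have hlim : Tendsto (fun n : ℕ => |e n| + |α| * ((n : ℝ)⁻¹ * ∑ k ∈ Finset.range n, max |x k| b)) atTop
        (nhds (|0| + |α| * b)) := he.abs.add (hc.const_mul _)
    have hlt : |(0 : ℝ)| + |α| * b < r * b := by
      rw [abs_zero, zero_add, hr]
      have : |α| < (1 + |α|) / 2 := by linarith
      exact mul_lt_mul_of_pos_right this hb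
    filter_upwards [hlim.eventually (gt_mem_nhds hlt), hx] with n hn hxn
    refine le_trans ?_ hn.le
    rw [hxn]
    refine (abs_add_le _ _).trans ?_
    rw [abs_mul, abs_div, Nat.abs_cast, div_eq_inv_mul]
    gcongr
    refine (Finset.abs_sum_le_sum_abs _ _).trans ?_
    exact Finset.sum_le_sum fun k _ => le_max_left _ _
  have hB0 : 0 ≤ B := (abs_nonneg _).trans (hB 0)
  have hpow : ∀ m : ℕ, ∀ᶠ n in atTop, |x n| ≤ ((1 + |α|) / 2) ^ m * (B + 1) := by
    intro m
    induction m with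
    | zero => exact Eventually.of_forall fun n => by simpa using (hB n).trans (by linarith)
    | succ m ih =>
      have := hstep _ (by positivity) ih
      rw [pow_succ', mul_assoc]
      exact this
  rw [tendsto_zero_iff_abs_tendsto_zero]
  rw [Metric.tendsto_atTop']
  intro ε hε
  have hp : Tendsto (fun m : ℕ => r ^ m * (B + 1)) atTop (nhds (0 * (B + 1))) :=
    (tendsto_pow_atTop_nhds_zero_of_lt_one hr0 hr1).mul_const _
  rw [zero_mul] at hp
  obtain ⟨m, hm⟩ := (hp.eventually (gt_mem_nhds hε)).exists
  obtain ⟨N, hN⟩ := eventually_atTop.1 (hpow m)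
  refine ⟨N, fun n hn => ?_⟩
  simp only [Function.comp, Real.dist_eq, sub_zero, abs_abs]
  exact (hN n hn.le).trans_lt hm

/-- final deterministic step -/
lemma erwaux_final (Δ M D : ℕ → ℝ) (c : ℝ) (hc : 0 < c)
    (hdec : ∀ n, Δ n = M n + ∑ k ∈ Finset.range n, D k)
    (hM : Tendsto (fun n : ℕ => M n / n) atTop (nhds 0))
    (e : ℕ → ℝ) (he : Tendsto e atTop (nhds 0))
    (hlow : ∀ k, c - e k ≤ D k)
    (hup : ∀ k, 0 < Δ k → D k ≤ c + e k) :
    Tendsto (fun n : ℕ => Δ n / n) atTop (nhds c) := by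
  have hlow' : Tendsto (fun n : ℕ => M n / n + (n : ℝ)⁻¹ * ∑ k ∈ Finset.range n, (c - e k)) atTop (nhds c) := by
    have h1 : Tendsto (fun k => c - e k) atTop (nhds c) := by simpa using he.const_sub c
    simpa using hM.add h1.cesaro
  have hpos : ∀ᶠ n in atTop, 0 < Δ n := by
    filter_upwards [hlow'.eventually (lt_mem_nhds hc), eventually_gt_atTop 0] with n hn hn0
    have hn0' : (0 : ℝ) < n := by positivity
    have h2 : M n / n + (n : ℝ)⁻¹ * ∑ k ∈ Finset.range n, (c - e k) ≤ Δ n / n := by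
      rw [hdec n, add_div, div_eq_inv_mul (∑ k ∈ Finset.range n, D k)]
      gcongr with k hk
      exact hlow k
    have h3 := hn.trans_le h2
    exact (div_pos_iff_of_pos_right hn0').1 h3
  have hD : Tendsto D atTop (nhds c) := by
    refine tendsto_of_tendsto_of_tendsto_of_le_of_le' (g := fun k => c - e k) (h := fun k => c + e k) ?_ ?_ ?_ ?_
    · simpa using he.const_sub c
    · simpa using he.const_add c
    · exact Eventually.of_forall hlow
    · filter_upwards [hpos] with k hk using hup k hk
  have := hM.add hD.cesaro
  rw [zero_add] at this
  refine this.congr ?_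
  intro n
  rw [hdec n, add_div, div_eq_inv_mul (∑ k ∈ Finset.range n, D k)]

namespace ERW

variable {G : Type*} [Group G] [DecidableEq G] {d : ℕ} {p : ℝ}
  {Ω : Type*} [MeasurableSpace Ω] {P : Measure Ω}

/-- the cylinder event that the first `n` steps are `s 1, …, s n` -/
def cyl (E : ERW G d p Ω P) (n : ℕ) (s : ℕ → G) : Set Ω :=
  {ω | ∀ k ∈ Finset.Icc 1 n, E.g k ω = s k}

/-- the history -/
def hist (E : ERW G d p Ω P) (ω : Ω) : ℕ → G := fun k => E.g k ω

/-- conditional probability of the step `a` -/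
def cprob (d : ℕ) (p : ℝ) (n : ℕ) (s : ℕ → G) (a : G) : ℝ :=
  if n = 0 then 1 / d else
    (p * ((((Finset.Icc 1 n).filter fun k => s k = a).card : ℝ) / n)
          + (1 - p) / ((d : ℝ) - 1)
            * (((n : ℝ) - (((Finset.Icc 1 n).filter fun k => s k = a).card : ℝ)) / n))

/-- a functional of the history depending only on the first `n` steps -/
def Adp {β : Type*} (n : ℕ) (F : (ℕ → G) → β) : Prop :=
  ∀ s s' : ℕ → G, (∀ k ∈ Finset.Icc 1 n, s k = s' k) → F s = F s'

/-- extension of a finite history -/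
def extend (E : ERW G d p Ω P) (n : ℕ) (s : Finset.Icc 1 n → E.S) : ℕ → G :=
  fun k => if h : k ∈ Finset.Icc 1 n then (s ⟨k, h⟩ : G) else 1

lemma meas_cyl (E : ERW G d p Ω P) (n : ℕ) (s : ℕ → G) : MeasurableSet (E.cyl n s) := by
  have : E.cyl n s = ⋂ k ∈ Finset.Icc 1 n, {ω | E.g k ω = s k} := by
    ext ω; simp [cyl]
  rw [this]
  exact Finset.measurableSet_biInter _ fun k _ => E.meas_g k (s k)

lemma Adp.mono {β : Type*} {n m : ℕ} (h : n ≤ m) {F : (ℕ → G) → β} (hF : Adp n F) : Adp m F := by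
  intro s s' hs
  exact hF s s' fun k hk => hs k (Finset.Icc_subset_Icc_right h hk)

lemma cprob_adp (n : ℕ) (a : G) : Adp n (fun s => cprob d p n s a) := by
  intro s s' hs
  have : ((Finset.Icc 1 n).filter fun k => s k = a) = ((Finset.Icc 1 n).filter fun k => s' k = a) := by
    apply Finset.filter_congr
    intro k hk
    rw [hs k hk]
  simp only [cprob, this]

lemma sum_cyl (E : ERW G d p Ω P) (n : ℕ) (Φ : Ω → ℝ) (ω : Ω) :
    Φ ω = ∑ s : Finset.Icc 1 n → E.S, (E.cyl n (E.extend n s)).indicator Φ ω := by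
  classical
  set s0 : Finset.Icc 1 n → E.S := fun k => ⟨E.g k ω, E.mem_S k (Finset.mem_Icc.1 k.2).1 ω⟩ with hs0
  rw [Finset.sum_eq_single s0]
  · rw [Set.indicator_of_mem]
    intro k hk
    simp [extend, hk, hs0, -Finset.mem_Icc]
  · intro s _ hs
    apply Set.indicator_of_notMem
    intro hmem
    apply hs
    funext k
    have := hmem k k.2
    apply Subtype.ext
    simpa [extend, hs0, -Finset.mem_Icc] using this.symm
  · simp

lemma cyl_eq (E : ERW G d p Ω P) {n : ℕ} {F : (ℕ → G) → ℝ} (hF : Adp n F) (s : ℕ → G) {ω : Ω}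
    (h : ω ∈ E.cyl n s) : F (E.hist ω) = F s := hF _ _ h

lemma meas_adp (E : ERW G d p Ω P) {n : ℕ} {F : (ℕ → G) → ℝ} (hF : Adp n F) :
    Measurable (fun ω => F (E.hist ω)) := by
  have : (fun ω => F (E.hist ω)) = fun ω => ∑ s : Finset.Icc 1 n → E.S,
      (E.cyl n (E.extend n s)).indicator (fun _ => F (E.extend n s)) ω := by
    funext ω
    rw [E.sum_cyl n (fun ω => F (E.hist ω)) ω]
    apply Finset.sum_congr rfl
    intro s _
    by_cases h : ω ∈ E.cyl n (E.extend n s)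
    · rw [Set.indicator_of_mem h, Set.indicator_of_mem h, E.cyl_eq hF _ h]
    · rw [Set.indicator_of_notMem h, Set.indicator_of_notMem h]
  rw [this]
  exact Finset.measurable_sum _ fun s _ => measurable_const.indicator (E.meas_cyl n _)

lemma cyl_update [IsProbabilityMeasure P] (E : ERW G d p Ω P) (n : ℕ) (s : ℕ → G) (a : G) (ha : a ∈ E.S) :
    P.real (E.cyl n s ∩ {ω | E.g (n + 1) ω = a}) = cprob d p n s a * P.real (E.cyl n s) := by
  rcases Nat.eq_zero_or_pos n with rfl | hn
  · have : E.cyl 0 s = Set.univ := by ext; simp [cyl]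
    rw [this]
    simp only [cprob, Set.univ_inter, probReal_univ, mul_one, if_true]
    exact E.init a ha
  · simp only [cprob, hn.ne', if_false]
    exact E.update n hn s a ha

lemma integral_key [IsProbabilityMeasure P] (E : ERW G d p Ω P) {n : ℕ} {F : (ℕ → G) → ℝ} (hF : Adp n F)
    (a : G) (ha : a ∈ E.S) :
    ∫ ω, F (E.hist ω) * ((if E.g (n + 1) ω = a then 1 else 0) - cprob d p n (E.hist ω) a) ∂P = 0 := by
  have hrep : ∀ ω, F (E.hist ω) * ((if E.g (n + 1) ω = a then 1 else 0) - cprob d p n (E.hist ω) a)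
      = ∑ s : Finset.Icc 1 n → E.S, F (E.extend n s) *
        ((E.cyl n (E.extend n s) ∩ {ω | E.g (n + 1) ω = a}).indicator (fun _ => (1 : ℝ)) ω
          - cprob d p n (E.extend n s) a * (E.cyl n (E.extend n s)).indicator (fun _ => (1 : ℝ)) ω) := by
    intro ω
    rw [E.sum_cyl n (fun ω => F (E.hist ω) * ((if E.g (n + 1) ω = a then 1 else 0) - cprob d p n (E.hist ω) a)) ω]
    apply Finset.sum_congr rfl
    intro s _
    by_cases h : ω ∈ E.cyl n (E.extend n s)
    · rw [Set.indicator_of_mem h, Set.indicator_of_mem h, E.cyl_eq hF _ h,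
        E.cyl_eq (cprob_adp n a) _ h]
      by_cases h2 : E.g (n + 1) ω = a
      · have h3 : ω ∈ E.cyl n (E.extend n s) ∩ {ω | E.g (n + 1) ω = a} := ⟨h, h2⟩
        rw [Set.indicator_of_mem h3, if_pos h2, mul_one]
      · have h3 : ω ∉ E.cyl n (E.extend n s) ∩ {ω | E.g (n + 1) ω = a} := fun h4 => h2 h4.2
        rw [Set.indicator_of_notMem h3, if_neg h2, mul_one]
    · have h3 : ω ∉ E.cyl n (E.extend n s) ∩ {ω | E.g (n + 1) ω = a} := fun h4 => h h4.1
      rw [Set.indicator_of_notMem h, Set.indicator_of_notMem h, Set.indicator_of_notMem h3]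
      simp
  simp_rw [hrep]
  have hm2 : ∀ s, MeasurableSet (E.cyl n s ∩ {ω | E.g (n + 1) ω = a}) := fun s =>
    (E.meas_cyl n s).inter (E.meas_g _ _)
  have hi1 : ∀ s, Integrable ((E.cyl n s ∩ {ω | E.g (n + 1) ω = a}).indicator (fun _ => (1 : ℝ))) P :=
    fun s => (integrable_const _).indicator (hm2 s)
  have hi2 : ∀ s, Integrable ((E.cyl n s).indicator (fun _ => (1 : ℝ))) P :=
    fun s => (integrable_const _).indicator (E.meas_cyl n s)
  rw [integral_finsetSum]
  · apply Finset.sum_eq_zero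
    intro s _
    rw [integral_const_mul, integral_sub (hi1 _) ((hi2 _).const_mul _), integral_const_mul,
      integral_indicator (hm2 _), integral_indicator (E.meas_cyl n _)]
    simp only [setIntegral_const, smul_eq_mul, mul_one]
    rw [E.cyl_update n _ a ha]
    simp
  · intro s _
    exact ((hi1 _).sub ((hi2 _).const_mul _)).const_mul _

/-- martingale differences attached to an adapted family of weights -/
def Yf (E : ERW G d p Ω P) (c : ℕ → (ℕ → G) → G → ℝ) (n : ℕ) (s : ℕ → G) : ℝ :=
  ∑ a ∈ E.S, c n s a * ((if s (n + 1) = a then 1 else 0) - cprob d p n s a)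

lemma Yf_adp (E : ERW G d p Ω P) (c : ℕ → (ℕ → G) → G → ℝ) (hc : ∀ n a, Adp n (fun s => c n s a)) (n : ℕ) :
    Adp (n + 1) (E.Yf c n) := by
  intro s s' hs
  have hs' : ∀ k ∈ Finset.Icc 1 n, s k = s' k := fun k hk =>
    hs k (Finset.Icc_subset_Icc_right (Nat.le_succ n) hk)
  have h1 : s (n + 1) = s' (n + 1) := hs _ (by simp)
  apply Finset.sum_congr rfl
  intro a _
  have h2 := hc n a s s' hs'
  have h3 := cprob_adp (d := d) (p := p) n a s s' hs'
  simp only at h2 h3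
  rw [h1, h2, h3]

lemma cprob_bound (hd : 3 ≤ d) (hp0 : 0 ≤ p) (hp1 : p < 1) (n : ℕ) (s : ℕ → G) (a : G) :
    |cprob d p n s a| ≤ 2 := by
  have hd' : (3 : ℝ) ≤ d := by exact_mod_cast hd
  unfold cprob
  split_ifs with h
  · rw [abs_of_nonneg (by positivity), div_le_iff₀ (by linarith)]
    linarith
  · have hn : (0 : ℝ) < n := by positivity
    set m : ℝ := (((Finset.Icc 1 n).filter fun k => s k = a).card : ℝ) with hm
    have hm0 : 0 ≤ m := by positivity
    have hmn : m ≤ n := by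
      rw [hm]
      exact_mod_cast (Finset.card_filter_le _ _).trans (by simp)
    have h1 : 0 ≤ m / n := by positivity
    have h2 : m / n ≤ 1 := (div_le_one hn).2 hmn
    have h3 : 0 ≤ (n - m) / n := div_nonneg (by linarith) hn.le
    have h4 : (n - m) / n ≤ 1 := (div_le_one hn).2 (by linarith)
    have h5 : 0 ≤ (1 - p) / ((d : ℝ) - 1) := div_nonneg (by linarith) (by linarith)
    have h6 : (1 - p) / ((d : ℝ) - 1) ≤ 1 := (div_le_one (by linarith)).2 (by linarith)
    have h7 : p * (m / n) ≤ 1 := mul_le_one₀ hp1.le h1 h2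
    have h8 : (1 - p) / ((d : ℝ) - 1) * ((n - m) / n) ≤ 1 := mul_le_one₀ h6 h3 h4
    rw [abs_of_nonneg (by positivity)]
    linarith

lemma Yf_slln [IsProbabilityMeasure P] (hd : 3 ≤ d) (hp0 : 0 ≤ p) (hp1 : p < 1) (E : ERW G d p Ω P)
    (c : ℕ → (ℕ → G) → G → ℝ) (hc : ∀ n a, Adp n (fun s => c n s a))
    (hb : ∀ n s a, a ∈ E.S → |c n s a| ≤ 1) :
    ∀ᵐ ω ∂P, Tendsto (fun n : ℕ => (∑ k ∈ Finset.range n, E.Yf c k (E.hist ω)) / n) atTop (nhds 0) := by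
  refine erwaux_slln (fun k ω => E.Yf c k (E.hist ω)) (fun n => E.meas_adp (E.Yf_adp c hc n)) (d * 3) ?_ ?_
  · intro n ω
    refine (Finset.abs_sum_le_sum_abs _ _).trans ?_
    have : ∀ a ∈ E.S, |c n (E.hist ω) a * ((if E.hist ω (n + 1) = a then 1 else 0)
        - cprob d p n (E.hist ω) a)| ≤ 3 := by
      intro a ha
      rw [abs_mul]
      have h1 := hb n (E.hist ω) a ha
      have h2 := cprob_bound hd hp0 hp1 n (E.hist ω) a
      have h3 : |(if E.hist ω (n + 1) = a then (1 : ℝ) else 0)| ≤ 1 := by split_ifs <;> simp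
      have h4 := abs_sub (if E.hist ω (n + 1) = a then (1 : ℝ) else 0) (cprob d p n (E.hist ω) a)
      have h5 := abs_nonneg (c n (E.hist ω) a)
      calc _ ≤ 1 * (3 : ℝ) := mul_le_mul h1 (by linarith) (abs_nonneg _) zero_le_one
        _ = 3 := one_mul _
    refine (Finset.sum_le_sum this).trans ?_
    simp [E.card_S]
  · intro n
    have hM : Adp n (fun s => ∑ k ∈ Finset.range n, E.Yf c k s) := by
      intro s s' hs
      apply Finset.sum_congr rfl
      intro k hk
      exact (E.Yf_adp c hc k).mono (Finset.mem_range.1 hk) s s' hs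
    have hF : ∀ a, Adp n (fun s => (∑ k ∈ Finset.range n, E.Yf c k s) * c n s a) := by
      intro a s s' hs
      have h1 := hM s s' hs
      have h2 := hc n a s s' hs
      simp only at h1 h2 ⊢
      rw [h1, h2]
    have e : ∀ ω, (∑ k ∈ Finset.range n, E.Yf c k (E.hist ω)) * E.Yf c n (E.hist ω)
        = ∑ a ∈ E.S, ((∑ k ∈ Finset.range n, E.Yf c k (E.hist ω)) * c n (E.hist ω) a) *
          ((if E.g (n + 1) ω = a then 1 else 0) - cprob d p n (E.hist ω) a) := by
      intro ω
      conv_lhs => rw [Yf, Finset.mul_sum]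
      apply Finset.sum_congr rfl
      intro a _
      rw [mul_assoc]
      rfl
    simp_rw [e]
    rw [integral_finsetSum]
    · apply Finset.sum_eq_zero
      intro a ha
      exact E.integral_key (hF a) a ha
    · intro a ha
      have hA : Adp (n + 1) (fun s => ((∑ k ∈ Finset.range n, E.Yf c k s) * c n s a) *
          ((if s (n + 1) = a then 1 else 0) - cprob d p n s a)) := by
        intro s s' hs
        have h1 := (hF a).mono (Nat.le_succ n) s s' hs
        have h2 := (cprob_adp (d := d) (p := p) n a).mono (Nat.le_succ n) s s' hs
        have h3 : s (n + 1) = s' (n + 1) := hs _ (by simp)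
        simp only at h1 h2 ⊢
        rw [h1, h2, h3]
      -- finitely many values
      have hrep := fun ω => E.sum_cyl (n + 1) (fun ω => ((∑ k ∈ Finset.range n, E.Yf c k (E.hist ω)) * c n (E.hist ω) a) *
          ((if E.g (n + 1) ω = a then 1 else 0) - cprob d p n (E.hist ω) a)) ω
      rw [show (fun ω => ((∑ k ∈ Finset.range n, E.Yf c k (E.hist ω)) * c n (E.hist ω) a) *
          ((if E.g (n + 1) ω = a then 1 else 0) - cprob d p n (E.hist ω) a)) = _ from funext hrep]
      refine integrable_finsetSum _ fun s _ => ?_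
      refine ((integrable_const ((fun s => ((∑ k ∈ Finset.range n, E.Yf c k s) * c n s a) *
          ((if s (n + 1) = a then 1 else 0) - cprob d p n s a)) (E.extend (n + 1) s))).indicator
            (E.meas_cyl (n + 1) (E.extend (n + 1) s))).congr ?_
      refine Eventually.of_forall fun ω => ?_
      by_cases h : ω ∈ E.cyl (n + 1) (E.extend (n + 1) s)
      · rw [Set.indicator_of_mem h, Set.indicator_of_mem h]
        exact (E.cyl_eq hA _ h).symm
      · rw [Set.indicator_of_notMem h, Set.indicator_of_notMem h]

lemma card_eq_sum (n : ℕ) (s : ℕ → G) (a : G) :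
    (((Finset.Icc 1 n).filter fun k => s k = a).card : ℝ)
      = ∑ k ∈ Finset.range n, if s (k + 1) = a then 1 else 0 := by
  rw [Finset.card_filter]
  push_cast
  rw [Finset.range_eq_Ico, Finset.sum_Ico_add' (fun k => if s k = a then (1 : ℝ) else 0) 0 n 1]
  apply Finset.sum_congr _ fun _ _ => rfl
  ext k; simp

lemma cprob_tendsto [IsProbabilityMeasure P] (hd : 3 ≤ d) (hp0 : 0 ≤ p) (hp1 : p < 1) (E : ERW G d p Ω P)
    (a : G) (ha : a ∈ E.S) :
    ∀ᵐ ω ∂P, Tendsto (fun n => cprob d p n (E.hist ω) a) atTop (nhds (1 / d)) := by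
  have hd' : (3 : ℝ) ≤ d := by exact_mod_cast hd
  have h := E.Yf_slln hd hp0 hp1 (fun _ _ b => if b = a then 1 else 0) (fun _ _ _ _ _ => rfl)
    (fun _ _ b _ => by split_ifs <;> simp)
  filter_upwards [h] with ω hω
  set s := E.hist ω with hs
  have hY : ∀ k, E.Yf (fun _ _ b => if b = a then 1 else 0) k s
      = (if s (k + 1) = a then 1 else 0) - cprob d p k s a := by
    intro k
    simp [Yf, ha]
  simp only [hY] at hω
  set α : ℝ := (p * d - 1) / (d - 1) with hα
  set N : ℕ → ℝ := fun n => (((Finset.Icc 1 n).filter fun k => s k = a).card : ℝ) with hN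
  set x : ℕ → ℝ := fun n => if n = 0 then 0 else N n / n - 1 / d with hx
  have hd1 : (d : ℝ) - 1 ≠ 0 := by linarith
  have hd0 : (d : ℝ) ≠ 0 := by linarith
  have hq : ∀ n, cprob d p n s a = 1 / d + α * x n := by
    intro n
    rcases Nat.eq_zero_or_pos n with rfl | hn
    · simp [cprob, hx]
    · have hn' : (n : ℝ) ≠ 0 := by positivity
      simp only [cprob, hx, hn.ne', if_false]
      change p * (N n / n) + (1 - p) / ((d : ℝ) - 1) * ((n - N n) / n) = _
      rw [hα]
      field_simp
      ring
  have hα1 : |α| < 1 := by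
    rw [hα, abs_lt]
    constructor
    · rw [lt_div_iff₀ (by linarith)]; nlinarith
    · rw [div_lt_one (by linarith)]; nlinarith
  have hxt : Tendsto x atTop (nhds 0) := by
    refine erwaux_contract x _ α 1 hα1 ?_ hω ?_
    · intro n
      rcases Nat.eq_zero_or_pos n with rfl | hn
      · simp [hx]
      · have hn' : (0 : ℝ) < n := by positivity
        have hm0 : 0 ≤ N n := by positivity
        have hmn : N n ≤ n := by
          simp only [hN]
          exact_mod_cast (Finset.card_filter_le _ _).trans (by simp)
        have h1 : 0 ≤ N n / n := by positivity
        have h2 : N n / n ≤ 1 := (div_le_one hn').2 hmn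
        have h3 : (0 : ℝ) ≤ 1 / d := by positivity
        have h4 : (1 : ℝ) / d ≤ 1 := (div_le_one (by linarith)).2 (by linarith)
        simp only [hx, hn.ne', if_false]
        rw [abs_le]
        constructor <;> linarith
    · filter_upwards [eventually_gt_atTop 0] with n hn
      have hn' : (n : ℝ) ≠ 0 := by positivity
      simp only [hq]
      rw [Finset.sum_sub_distrib, ← card_eq_sum, Finset.sum_add_distrib, ← Finset.mul_sum]
      change x n = (N n - _) / _ + _
      have hxn : x n = N n / n - 1 / d := by simp [hx, hn.ne']
      rw [hxn]
      simp only [Finset.sum_const, Finset.card_range, nsmul_eq_mul]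
      field_simp
      ring
  simp only [hq]
  simpa using (hxt.const_mul α).const_add (1 / (d : ℝ))

/-- position as a functional of the history -/
def posf (s : ℕ → G) : ℕ → G
  | 0 => 1
  | n + 1 => s (n + 1) * posf s n

lemma posf_adp (n : ℕ) : Adp n (fun s : ℕ → G => posf s n) := by
  induction n with
  | zero => intro s s' _; rfl
  | succ n ih =>
    intro s s' hs
    have h1 := ih.mono (Nat.le_succ n) s s' hs
    have h2 : s (n + 1) = s' (n + 1) := hs _ (by simp)
    simp only [posf] at h1 ⊢
    rw [h1, h2]

lemma pos_eq (E : ERW G d p Ω P) (n : ℕ) (ω : Ω) : E.pos n ω = posf (E.hist ω) n := by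
  induction n with
  | zero => rfl
  | succ n ih => simp only [pos, posf, ih]; rfl

lemma adj_mul (E : ERW G d p Ω P) (x a : G) (ha : a ∈ E.S) : (cayleyGraph E.S).Adj x (a * x) := by
  refine ⟨?_, Or.inl (by simpa using ha)⟩
  intro h
  have : a = 1 := by simpa using h.symm
  exact E.one_not_mem (this ▸ ha)

lemma exists_of_adj (E : ERW G d p Ω P) {x y : G} (h : (cayleyGraph E.S).Adj x y) :
    ∃ a ∈ E.S, y = a * x := by
  rcases h.2 with h | h
  · exact ⟨_, h, by simp⟩
  · refine ⟨_, E.symm_S _ h, by simp⟩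

lemma dist_step (E : ERW G d p Ω P) (x a : G) (ha : a ∈ E.S) :
    (cayleyGraph E.S).dist 1 x = (cayleyGraph E.S).dist 1 (a * x) + 1 ∨
    (cayleyGraph E.S).dist 1 (a * x) = (cayleyGraph E.S).dist 1 x + 1 :=
  E.tree.dist_eq_dist_add_one_of_adj 1 (E.adj_mul x a ha)

lemma parent_unique {V : Type*} {T : SimpleGraph V} (hT : T.IsTree) (u v w w' : V) (h : T.Adj v w) (h' : T.Adj v w')
    (hd : T.dist u v = T.dist u w + 1) (hd' : T.dist u v = T.dist u w' + 1) : w = w' := by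
  have key : ∀ z, T.Adj v z → T.dist u v = T.dist u z + 1 →
      ∃ q : T.Walk u v, q.IsPath ∧ q.penultimate = z := by
    intro z hz hdz
    obtain ⟨q, hq⟩ := hT.connected.exists_walk_length_eq_dist u z
    refine ⟨q.concat hz.symm, ?_, by simp⟩
    apply SimpleGraph.Walk.isPath_of_length_eq_dist
    rw [SimpleGraph.Walk.length_concat, hq, hdz]
  obtain ⟨q, hq, rfl⟩ := key w h hd
  obtain ⟨q', hq', rfl⟩ := key w' h' hd'
  rw [(hT.existsUnique_path u v).unique hq hq']

lemma parent_exists {V : Type*} {T : SimpleGraph V} (hT : T.IsTree) (u v : V) (huv : u ≠ v) :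
    ∃ w, T.Adj v w ∧ T.dist u v = T.dist u w + 1 := by
  obtain ⟨q, hq⟩ := hT.connected.exists_walk_length_eq_dist v u
  cases q with
  | nil => exact absurd rfl huv
  | cons h q =>
    rename_i w
    refine ⟨w, h, ?_⟩
    rcases hT.dist_eq_dist_add_one_of_adj u h with h1 | h1
    · exact h1
    · have := SimpleGraph.dist_le q
      rw [SimpleGraph.Walk.length_cons, SimpleGraph.dist_comm] at hq
      rw [SimpleGraph.dist_comm] at this
      omega

lemma sum_dist_one (E : ERW G d p Ω P) :
    ∑ a ∈ E.S, (((cayleyGraph E.S).dist 1 (a * 1) : ℝ) - (cayleyGraph E.S).dist 1 (1 : G)) = d := by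
  rw [Finset.sum_congr rfl (g := fun _ => (1 : ℝ))]
  · simp [E.card_S]
  · intro a ha
    have := SimpleGraph.dist_eq_one_iff_adj.2 (E.adj_mul 1 a ha)
    rw [this]; simp

lemma sum_dist (E : ERW G d p Ω P) (x : G) (hx : x ≠ 1) :
    ∑ a ∈ E.S, (((cayleyGraph E.S).dist 1 (a * x) : ℝ) - (cayleyGraph E.S).dist 1 x) = d - 2 := by
  obtain ⟨w, hw, hdw⟩ := parent_exists E.tree 1 x hx.symm
  obtain ⟨b, hb, rfl⟩ := E.exists_of_adj hw
  have e : ∀ a ∈ E.S, (((cayleyGraph E.S).dist 1 (a * x) : ℝ) - (cayleyGraph E.S).dist 1 x)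
      = 1 - (if a = b then 2 else 0) := by
    intro a ha
    split_ifs with h
    · subst h
      rw [hdw]; push_cast; ring
    · rcases E.dist_step x a ha with h1 | h1
      · exact absurd (mul_right_cancel (parent_unique E.tree 1 x _ _ (E.adj_mul x a ha) hw h1 hdw)) h
      · rw [h1]; push_cast; ring
  rw [Finset.sum_congr rfl e, Finset.sum_sub_distrib]
  simp [hb, E.card_S]

end ERW

/-- the ERW with memory parameter `p ∈ [0,1)` on a Cayley graph that is
the `d`-regular tree (`d ≥ 3`) satisfies `Δ n / n → (d - 2)/d` almost surely. -/
theorem erw_escape_rate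
    {G : Type*} [Group G] [DecidableEq G] {Ω : Type*} [MeasurableSpace Ω]
    {P : Measure Ω} [IsProbabilityMeasure P]
    (d : ℕ) (hd : 3 ≤ d) (p : ℝ) (hp0 : 0 ≤ p) (hp1 : p < 1)
    (E : ERW G d p Ω P) :
    ∀ᵐ ω ∂P, Tendsto (fun n : ℕ => (E.dist n ω : ℝ) / n) atTop
      (nhds (((d : ℝ) - 2) / d)) := by
  classical
  have hd' : (3 : ℝ) ≤ d := by exact_mod_cast hd
  have hd0 : (d : ℝ) ≠ 0 := by linarith
  set c : ℕ → (ℕ → G) → G → ℝ := fun n s a =>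
    ((cayleyGraph E.S).dist 1 (a * ERW.posf s n) : ℝ) - (cayleyGraph E.S).dist 1 (ERW.posf s n) with hc
  have hcb : ∀ n s a, a ∈ E.S → |c n s a| ≤ 1 := by
    intro n s a ha
    simp only [hc]
    rcases E.dist_step (ERW.posf s n) a ha with h | h
    · rw [h]; push_cast; rw [abs_le]; constructor <;> linarith
    · rw [h]; push_cast; rw [abs_le]; constructor <;> linarith
  have h1 := E.Yf_slln hd hp0 hp1 c (fun n a s s' hs => by
    have := ERW.posf_adp n s s' hs
    simp only at this
    simp only [hc, this]) hcb
  have h2 : ∀ᵐ ω ∂P, ∀ a ∈ E.S, Tendsto (fun n => ERW.cprob d p n (E.hist ω) a) atTop (nhds (1 / d)) :=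
    (Filter.eventually_all_finset E.S).2 fun a ha => E.cprob_tendsto hd hp0 hp1 a ha
  filter_upwards [h1, h2] with ω hM hq
  set s := E.hist ω with hs
  have hbound : ∀ k, |∑ a ∈ E.S, c k s a * ERW.cprob d p k s a - (∑ a ∈ E.S, c k s a) / d|
      ≤ ∑ a ∈ E.S, |ERW.cprob d p k s a - 1 / d| := by
    intro k
    rw [Finset.sum_div, ← Finset.sum_sub_distrib]
    refine (Finset.abs_sum_le_sum_abs _ _).trans (Finset.sum_le_sum fun a ha => ?_)
    have : c k s a * ERW.cprob d p k s a - c k s a / d = c k s a * (ERW.cprob d p k s a - 1 / d) := by ring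
    rw [this, abs_mul]
    exact mul_le_of_le_one_left (abs_nonneg _) (hcb k s a ha)
  have hne : ∀ k, ERW.posf s k ≠ 1 → (∑ a ∈ E.S, c k s a) / d = ((d : ℝ) - 2) / d := by
    intro k hk
    rw [← E.sum_dist _ hk]
  have heq : ∀ k, ERW.posf s k = 1 → (∑ a ∈ E.S, c k s a) / d = 1 := by
    intro k hk
    simp only [hc, hk]
    rw [E.sum_dist_one, div_self hd0]
  refine erwaux_final (fun n => (E.dist n ω : ℝ)) (fun n => ∑ k ∈ Finset.range n, E.Yf c k s)
    (fun k => ∑ a ∈ E.S, c k s a * ERW.cprob d p k s a) (((d : ℝ) - 2) / d)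
    (div_pos (by linarith) (by linarith)) ?_ hM
    (fun k => ∑ a ∈ E.S, |ERW.cprob d p k s a - 1 / d|) ?_ ?_ ?_
  · intro n
    rw [← Finset.sum_add_distrib]
    induction n with
    | zero => simp [ERW.dist, ERW.pos]
    | succ n ih =>
      rw [Finset.sum_range_succ, ← ih]
      have hin : s (n + 1) ∈ E.S := E.mem_S (n + 1) (by omega) ω
      have e1 : E.Yf c n s + ∑ a ∈ E.S, c n s a * ERW.cprob d p n s a = c n s (s (n + 1)) := by
        rw [ERW.Yf, ← Finset.sum_add_distrib]
        rw [Finset.sum_congr rfl (g := fun a => if s (n + 1) = a then c n s a else 0)]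
        · simp [hin]
        · intro a _
          split_ifs <;> ring
      rw [e1]
      simp only [hc, ERW.dist, ERW.pos_eq, ERW.posf]
      ring
  · have : Tendsto (fun k => ∑ a ∈ E.S, |ERW.cprob d p k s a - 1 / d|) atTop
        (nhds (∑ a ∈ E.S, |(1 : ℝ) / d - 1 / d|)) :=
      tendsto_finsetSum _ fun a ha => ((hq a ha).sub_const _).abs
    simpa using this
  · intro k
    have hb := (abs_le.1 (hbound k)).1
    by_cases hk : ERW.posf s k = 1
    · rw [heq k hk] at hb
      have : ((d : ℝ) - 2) / d ≤ 1 := (div_le_one (by linarith)).2 (by linarith)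
      linarith
    · rw [hne k hk] at hb
      linarith
  · intro k hk
    have hb := (abs_le.1 (hbound k)).2
    have hk1 : ERW.posf s k ≠ 1 := by
      intro h
      simp only [ERW.dist, ERW.pos_eq] at hk
      rw [← hs, h] at hk
      simp at hk
    rw [hne k hk1] at hb
    linarith

end
end

section
/- For the elephant random walk on a Cayley graph that is the d-regular tree T_d (d ≥ 3): for any m ∈ [1, 2) there exists ε > 0 such that for all memory parameters p ∈ (1/d − ε, 1/d + ε) there is a constant c > 0 with E|Δ_n/n − (d − 2)/d|^m ≥ c · n^{−m/2} for all n ≥ 1. -/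
open MeasureTheory ProbabilityTheory Filter

noncomputable section

namespace ERWaux

open Finset

variable {G : Type*} [DecidableEq G]

/-- deviation of the count of `a` from its mean. -/
def Dv (d : ℕ) (a : G) (L : List G) : ℝ := (L.count a : ℝ) - (L.length : ℝ) / d

/-- one-step transition probability. -/
def qq (d : ℕ) (β : ℝ) (a : G) (L : List G) : ℝ := 1 / (d : ℝ) + β * (Dv d a L / L.length)

/-- expectation functional on words of length `n`. -/
def EE (S : Finset G) (d : ℕ) (β : ℝ) : ℕ → (List G → ℝ) → ℝ
  | 0, Φ => Φ []
  | n + 1, Φ => EE S d β n (fun L => ∑ a ∈ S, qq d β a L * Φ (a :: L))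

/-- words of length `n` in `S`. -/
def Word (S : Finset G) (n : ℕ) (L : List G) : Prop := L.length = n ∧ ∀ x ∈ L, x ∈ S

lemma Word.cons {S : Finset G} {n : ℕ} {L : List G} (h : Word S n L) {a : G} (ha : a ∈ S) :
    Word S (n + 1) (a :: L) := by
  refine ⟨by simp [h.1], ?_⟩
  intro x hx
  rcases List.mem_cons.1 hx with rfl | hx
  · exact ha
  · exact h.2 x hx

lemma sum_count {S : Finset G} {L : List G} (h : ∀ x ∈ L, x ∈ S) :
    ∑ a ∈ S, (L.count a : ℝ) = L.length := by
  induction L with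
  | nil => simp
  | cons b L ih =>
    have h1 := ih (fun x hx => h x (List.mem_cons_of_mem _ hx))
    have hb : b ∈ S := h b List.mem_cons_self
    simp only [List.count_cons, List.length_cons]
    push_cast
    rw [Finset.sum_add_distrib, h1]
    simp [hb]

lemma sum_Dv {S : Finset G} {d : ℕ} (hS : S.card = d) (hd : 3 ≤ d) {L : List G}
    (h : ∀ x ∈ L, x ∈ S) : ∑ a ∈ S, Dv d a L = 0 := by
  have hd0 : (d : ℝ) ≠ 0 := by positivity
  simp only [Dv, Finset.sum_sub_distrib, sum_count h, Finset.sum_const, hS, nsmul_eq_mul]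
  field_simp
  ring

lemma sum_qq {S : Finset G} {d : ℕ} (β : ℝ) (hS : S.card = d) (hd : 3 ≤ d) {L : List G}
    (h : ∀ x ∈ L, x ∈ S) : ∑ a ∈ S, qq d β a L = 1 := by
  have hd0 : (d : ℝ) ≠ 0 := by positivity
  simp only [qq, Finset.sum_add_distrib, ← Finset.mul_sum, ← Finset.sum_div, sum_Dv hS hd h,
    Finset.sum_const, hS, nsmul_eq_mul]
  field_simp
  simp

lemma Dv_div_le {d : ℕ} (hd : 3 ≤ d) (a : G) (L : List G) : |Dv d a L / L.length| ≤ 1 := by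
  have hd3 : (3 : ℝ) ≤ d := by exact_mod_cast hd
  rcases Nat.eq_zero_or_pos L.length with h0 | h0
  · simp [h0]
  have hl : (0 : ℝ) < L.length := by exact_mod_cast h0
  rw [abs_div, abs_of_pos hl, div_le_one hl, Dv, abs_le]
  have h1 : (L.count a : ℝ) ≤ L.length := by exact_mod_cast List.count_le_length
  have h2 : (0 : ℝ) ≤ L.count a := by positivity
  have h3 : (L.length : ℝ) / d ≤ L.length := div_le_self hl.le (by linarith)
  have h4 : 0 ≤ (L.length : ℝ) / d := by positivity
  constructor <;> linarith

lemma qq_lower {d : ℕ} {β : ℝ} (hd : 3 ≤ d) (hβ : |β| ≤ 1 / (2 * d)) (a : G) (L : List G) :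
    1 / (2 * (d : ℝ)) ≤ qq d β a L := by
  have h := Dv_div_le hd a L
  have h2 : |β * (Dv d a L / L.length)| ≤ 1 / (2 * d) := by
    rw [abs_mul]
    calc _ ≤ |β| * 1 := by gcongr
      _ ≤ _ := by simpa using hβ
  have h3 := (abs_le.1 h2).1
  have : 1 / (d : ℝ) = 1 / (2 * d) + 1 / (2 * d) := by field_simp; norm_num
  unfold qq
  linarith

section func
variable {S : Finset G} {d : ℕ} {β : ℝ}

lemma EE_add (n : ℕ) (Φ Ψ : List G → ℝ) :
    EE S d β n (fun L => Φ L + Ψ L) = EE S d β n Φ + EE S d β n Ψ := by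
  induction n generalizing Φ Ψ with
  | zero => rfl
  | succ n ih => simp only [EE, mul_add, Finset.sum_add_distrib, ih]

lemma EE_smul (n : ℕ) (c : ℝ) (Φ : List G → ℝ) :
    EE S d β n (fun L => c * Φ L) = c * EE S d β n Φ := by
  induction n generalizing Φ with
  | zero => rfl
  | succ n ih =>
    simp only [EE]
    rw [← ih]
    congr 1
    funext L
    rw [Finset.mul_sum]
    exact Finset.sum_congr rfl (fun a _ => by ring)

lemma EE_mono (hd : 3 ≤ d) (hβ : |β| ≤ 1 / (2 * d)) (n : ℕ) {Φ Ψ : List G → ℝ}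
    (h : ∀ L, Word S n L → Φ L ≤ Ψ L) : EE S d β n Φ ≤ EE S d β n Ψ := by
  induction n generalizing Φ Ψ with
  | zero => exact h [] ⟨rfl, by simp⟩
  | succ n ih =>
    refine ih (fun L hL => Finset.sum_le_sum fun a ha => ?_)
    have hq : 0 ≤ qq d β a L := le_trans (by positivity) (qq_lower hd hβ a L)
    exact mul_le_mul_of_nonneg_left (h _ (hL.cons ha)) hq

lemma EE_congr (hd : 3 ≤ d) (hβ : |β| ≤ 1 / (2 * d)) (n : ℕ) {Φ Ψ : List G → ℝ}
    (h : ∀ L, Word S n L → Φ L = Ψ L) : EE S d β n Φ = EE S d β n Ψ :=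
  le_antisymm (EE_mono hd hβ n fun L hL => (h L hL).le)
    (EE_mono hd hβ n fun L hL => (h L hL).ge)

lemma EE_const (hS : S.card = d) (hd : 3 ≤ d) (hβ : |β| ≤ 1 / (2 * d)) (n : ℕ) (c : ℝ) :
    EE S d β n (fun _ => c) = c := by
  induction n with
  | zero => rfl
  | succ n ih =>
    calc _ = EE S d β n (fun _ => c) := by
          rw [EE]
          refine EE_congr hd hβ n fun L hL => ?_
          rw [← Finset.sum_mul, sum_qq β hS hd hL.2, one_mul]
      _ = c := ih

lemma EE_sum {ι : Type*} (T : Finset ι) (n : ℕ) (Φ : ι → List G → ℝ) :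
    EE S d β n (fun L => ∑ i ∈ T, Φ i L) = ∑ i ∈ T, EE S d β n (Φ i) := by
  classical
  induction T using Finset.induction_on with
  | empty => simpa using EE_smul (S := S) (d := d) (β := β) n 0 (fun _ => 0)
  | insert i T hi ih => simp only [Finset.sum_insert hi, EE_add, ih]

/-- second moment of the deviations. -/
lemma EE_Dv_sq (hS : S.card = d) (hd : 3 ≤ d) (hβ : |β| ≤ 1 / (2 * d)) {b : G} (hb : b ∈ S)
    (n : ℕ) : EE S d β n (fun L => Dv d b L ^ 2) ≤ 2 * n := by
  have hd3 : (3 : ℝ) ≤ d := by exact_mod_cast hd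
  have hβ' : |β| ≤ 1 / 4 := by
    refine hβ.trans ?_
    rw [div_le_div_iff₀ (by positivity) (by norm_num)]; linarith
  induction n with
  | zero => simp [EE, Dv]
  | succ n ih =>
    have key : EE S d β (n + 1) (fun L => Dv d b L ^ 2) ≤
        EE S d β n (fun L => (1 + 1 / 2 / (n : ℝ)) * Dv d b L ^ 2 + 1) := by
      rw [EE]
      refine EE_mono hd hβ n fun L hL => ?_
      have hD : ∀ a, Dv d b (a :: L) = Dv d b L + ((if a = b then 1 else 0) - 1 / d) := by
        intro a
        simp only [Dv, List.count_cons, List.length_cons, beq_iff_eq]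
        push_cast
        split_ifs <;> simp <;> ring
      set x := Dv d b L with hx
      have e1 : ∀ a ∈ S, qq d β a L * Dv d b (a :: L) ^ 2 ≤
          qq d β a L * (x ^ 2 - 2 * x / d + 1) + (if a = b then qq d β a L * (2 * x) else 0) := by
        intro a ha
        have hq : 0 ≤ qq d β a L := le_trans (by positivity) (qq_lower hd hβ a L)
        have h1d : 1 / (d : ℝ) ≤ 1 := by rw [div_le_one (by linarith)]; linarith
        have h0d : 0 ≤ 1 / (d : ℝ) := by positivity
        rw [hD a]
        split_ifs with hab
        · rw [← mul_add]
          refine mul_le_mul_of_nonneg_left ?_ hq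
          have : 2 * x / d = 2 * x * (1 / d) := by ring
          rw [this]; nlinarith
        · rw [add_zero]
          refine mul_le_mul_of_nonneg_left ?_ hq
          have : 2 * x / d = 2 * x * (1 / d) := by ring
          rw [this]; nlinarith
      refine (Finset.sum_le_sum e1).trans ?_
      rw [Finset.sum_add_distrib, ← Finset.sum_mul, sum_qq β hS hd hL.2, Finset.sum_ite_eq' S b,
        if_pos hb, qq, hL.1, ← hx]
      have h5 : β * (x / n) * (2 * x) ≤ 1 / 2 / (n : ℝ) * x ^ 2 := by
        have : β * (x / n) * (2 * x) = (2 * β) * (x ^ 2 / n) := by ring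
        rw [this]
        have : 1 / 2 / (n : ℝ) * x ^ 2 = (1 / 2) * (x ^ 2 / n) := by ring
        rw [this]
        refine mul_le_mul_of_nonneg_right ?_ (by positivity)
        have := le_abs_self β
        linarith
      have h6 : 1 / (d : ℝ) * (2 * x) = 2 * x / d := by ring
      linarith [h5, h6]
    refine key.trans ?_
    rw [EE_add, EE_smul, EE_const hS hd hβ]
    rcases Nat.eq_zero_or_pos n with rfl | hn
    · simp only [Nat.cast_zero, div_zero, add_zero, one_mul] at ih ⊢
      push_cast; linarith
    · have hn' : (0 : ℝ) < n := by exact_mod_cast hn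
      have : (1 + 1 / 2 / (n : ℝ)) * EE S d β n (fun L => Dv d b L ^ 2) ≤
          (1 + 1 / 2 / (n : ℝ)) * (2 * n) := by gcongr
      have h2 : (1 + 1 / 2 / (n : ℝ)) * (2 * n) = 2 * n + 1 := by field_simp
      push_cast; linarith

lemma EE_Dv_abs (hS : S.card = d) (hd : 3 ≤ d) (hβ : |β| ≤ 1 / (2 * d)) {b : G} (hb : b ∈ S)
    (n : ℕ) (hn : 1 ≤ n) :
    EE S d β n (fun L => |Dv d b L| / n) ≤ 3 / 2 / √(n : ℝ) := by
  have hn' : (0 : ℝ) < n := by exact_mod_cast hn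
  obtain ⟨s, hs0, hs⟩ : ∃ s : ℝ, 0 < s ∧ (n : ℝ) = s ^ 2 :=
    ⟨√n, Real.sqrt_pos.2 hn', (Real.sq_sqrt hn'.le).symm⟩
  have hsq : √(n : ℝ) = s := by rw [hs, Real.sqrt_sq hs0.le]
  rw [hsq]
  have h1 : EE S d β n (fun L => |Dv d b L| / n) ≤
      EE S d β n (fun L => 1 / (2 * s ^ 3) * Dv d b L ^ 2 + 1 / (2 * s)) := by
    refine EE_mono hd hβ n fun L _ => ?_
    rw [hs, ← sq_abs (Dv d b L)]
    have : 1 / (2 * s ^ 3) * |Dv d b L| ^ 2 + 1 / (2 * s) - |Dv d b L| / s ^ 2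
        = (|Dv d b L| - s) ^ 2 / (2 * s ^ 3) := by field_simp; ring
    have h2 : 0 ≤ (|Dv d b L| - s) ^ 2 / (2 * s ^ 3) := by positivity
    linarith
  refine h1.trans ?_
  rw [EE_add, EE_smul, EE_const hS hd hβ]
  have h2 : 1 / (2 * s ^ 3) * EE S d β n (fun L => Dv d b L ^ 2) ≤ 1 / (2 * s ^ 3) * (2 * s ^ 2) := by
    gcongr
    rw [← hs]; exact EE_Dv_sq hS hd hβ hb n
  have h3 : 1 / (2 * s ^ 3) * (2 * s ^ 2) + 1 / (2 * s) = 3 / 2 / s := by field_simp; norm_num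
  linarith

end func

section walk
variable (S : Finset G) (d : ℕ) (β : ℝ) (inc : G → List G → ℝ)

/-- conditional drift. -/
def Gd (L : List G) : ℝ := ∑ a ∈ S, qq d β a L * inc a L

/-- martingale part. -/
def Mt : List G → ℝ
  | [] => 0
  | a :: L => Mt L + (inc a L - Gd S d β inc L)

/-- nonnegative part coming from the root. -/
def Bt : List G → ℝ
  | [] => 0
  | _ :: L => Bt L + ((∑ a ∈ S, inc a L) - ((d : ℝ) - 2)) / d

/-- memory part. -/
def Rt : List G → ℝ
  | [] => 0
  | _ :: L => Rt L + ∑ a ∈ S, Dv d a L / L.length * inc a L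

/-- sum of increments. -/
def Zt : List G → ℝ
  | [] => 0
  | a :: L => Zt L + (inc a L - ((d : ℝ) - 2) / d)

/-- conditional variance. -/
def Vt (L : List G) : ℝ := ∑ a ∈ S, qq d β a L * (inc a L - Gd S d β inc L) ^ 2

lemma Zt_eq (hd : 3 ≤ d) (L : List G) :
    Zt d inc L = Mt S d β inc L + Bt S d inc L + β * Rt S d inc L := by
  have hd0 : (d : ℝ) ≠ 0 := by positivity
  induction L with
  | nil => simp [Zt, Mt, Bt, Rt]
  | cons a L ih =>
    have h : Gd S d β inc L = (∑ a ∈ S, inc a L) / d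
        + β * ∑ a ∈ S, Dv d a L / L.length * inc a L := by
      simp only [Gd, qq, add_mul, Finset.sum_add_distrib, Finset.mul_sum, Finset.sum_div]
      congr 1 <;> exact Finset.sum_congr rfl (fun a _ => by ring)
    simp only [Zt, Mt, Bt, Rt, ih, h]
    ring

variable {S d β inc}

lemma Gd_abs (hS : S.card = d) (hd : 3 ≤ d) (hβ : |β| ≤ 1 / (2 * d))
    (hinc : ∀ L, ∀ a ∈ S, |inc a L| ≤ 1) {n : ℕ} {L : List G} (hL : Word S n L) :
    |Gd S d β inc L| ≤ 1 := by
  rw [← sum_qq β hS hd hL.2]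
  refine (Finset.abs_sum_le_sum_abs _ _).trans (Finset.sum_le_sum fun a ha => ?_)
  have hq : 0 ≤ qq d β a L := le_trans (by positivity) (qq_lower hd hβ a L)
  rw [abs_mul, abs_of_nonneg hq]
  exact mul_le_of_le_one_right hq (hinc L a ha)

lemma sum_y (hS : S.card = d) (hd : 3 ≤ d) {n : ℕ} {L : List G} (hL : Word S n L) :
    ∑ a ∈ S, qq d β a L * (inc a L - Gd S d β inc L) = 0 := by
  simp only [mul_sub, Finset.sum_sub_distrib, ← Finset.sum_mul, sum_qq β hS hd hL.2]
  simp [Gd]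

lemma EE_Mt (hS : S.card = d) (hd : 3 ≤ d) (hβ : |β| ≤ 1 / (2 * d)) (n : ℕ) :
    EE S d β n (Mt S d β inc) = 0 := by
  induction n with
  | zero => rfl
  | succ n ih =>
    rw [EE, ← ih]
    refine EE_congr hd hβ n fun L hL => ?_
    simp only [Mt]
    simp only [mul_add, Finset.sum_add_distrib, ← Finset.sum_mul, sum_qq β hS hd hL.2,
      sum_y hS hd hL]
    ring

lemma EE_Mt_sq_eq (hS : S.card = d) (hd : 3 ≤ d) (hβ : |β| ≤ 1 / (2 * d)) (n : ℕ) :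
    EE S d β (n + 1) (fun L => Mt S d β inc L ^ 2) =
      EE S d β n (fun L => Mt S d β inc L ^ 2) + EE S d β n (Vt S d β inc) := by
  rw [EE, ← EE_add]
  refine EE_congr hd hβ n fun L hL => ?_
  have h : ∀ a ∈ S, qq d β a L * Mt S d β inc (a :: L) ^ 2 =
      qq d β a L * Mt S d β inc L ^ 2
      + 2 * Mt S d β inc L * (qq d β a L * (inc a L - Gd S d β inc L))
      + qq d β a L * (inc a L - Gd S d β inc L) ^ 2 := by
    intro a _
    simp only [Mt]; ring
  rw [Finset.sum_congr rfl h, Finset.sum_add_distrib, Finset.sum_add_distrib, ← Finset.mul_sum,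
    ← Finset.sum_mul, sum_qq β hS hd hL.2, sum_y hS hd hL, Vt]
  ring

lemma y_abs (hS : S.card = d) (hd : 3 ≤ d) (hβ : |β| ≤ 1 / (2 * d))
    (hinc : ∀ L, ∀ a ∈ S, |inc a L| ≤ 1) {n : ℕ} {L : List G} (hL : Word S n L) {a : G}
    (ha : a ∈ S) : |inc a L - Gd S d β inc L| ≤ 2 := by
  have h1 := hinc L a ha
  have h2 := Gd_abs hS hd hβ hinc hL
  rw [abs_le] at *
  constructor <;> linarith

lemma EE_Mt_sq_le (hS : S.card = d) (hd : 3 ≤ d) (hβ : |β| ≤ 1 / (2 * d))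
    (hinc : ∀ L, ∀ a ∈ S, |inc a L| ≤ 1) (n : ℕ) :
    EE S d β n (fun L => Mt S d β inc L ^ 2) ≤ 4 * n := by
  induction n with
  | zero => simp [EE, Mt]
  | succ n ih =>
    have h : EE S d β n (Vt S d β inc) ≤ EE S d β n (fun _ => 4) := by
      refine EE_mono hd hβ n fun L hL => ?_
      calc Vt S d β inc L ≤ ∑ a ∈ S, qq d β a L * 4 := by
            refine Finset.sum_le_sum fun a ha => ?_
            have hq : 0 ≤ qq d β a L := le_trans (by positivity) (qq_lower hd hβ a L)
            refine mul_le_mul_of_nonneg_left ?_ hq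
            have := abs_le.1 (y_abs hS hd hβ hinc hL ha)
            nlinarith
        _ = 4 := by rw [← Finset.sum_mul, sum_qq β hS hd hL.2, one_mul]
    rw [EE_const hS hd hβ] at h
    rw [EE_Mt_sq_eq hS hd hβ]
    push_cast
    linarith

lemma EE_Mt_four_le (hS : S.card = d) (hd : 3 ≤ d) (hβ : |β| ≤ 1 / (2 * d))
    (hinc : ∀ L, ∀ a ∈ S, |inc a L| ≤ 1) (n : ℕ) :
    EE S d β n (fun L => Mt S d β inc L ^ 4) ≤ 96 * (n : ℝ) ^ 2 := by
  induction n with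
  | zero => simp [EE, Mt]
  | succ n ih =>
    have h : EE S d β (n + 1) (fun L => Mt S d β inc L ^ 4) ≤
        EE S d β n (fun L => (Mt S d β inc L ^ 4 + 40 * Mt S d β inc L ^ 2) + 48) := by
      rw [EE]
      refine EE_mono hd hβ n fun L hL => ?_
      set x := Mt S d β inc L with hx
      have h1 : ∀ a ∈ S, qq d β a L * Mt S d β inc (a :: L) ^ 4 ≤
          qq d β a L * (x ^ 4 + 40 * x ^ 2 + 48)
          + 4 * x ^ 3 * (qq d β a L * (inc a L - Gd S d β inc L)) := by
        intro a ha
        have hq : 0 ≤ qq d β a L := le_trans (by positivity) (qq_lower hd hβ a L)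
        have hy := y_abs hS hd hβ hinc hL ha
        simp only [Mt, ← hx]
        set y := inc a L - Gd S d β inc L
        have : (x + y) ^ 4 ≤ x ^ 4 + 40 * x ^ 2 + 48 + 4 * x ^ 3 * y := by
          have hy2 : y ^ 2 ≤ 4 := by
            have := abs_le.1 hy
            nlinarith
          have e1 : x ^ 2 * y ^ 2 ≤ x ^ 2 * 4 := by gcongr
          have e2 : 2 * (x * y) ≤ x ^ 2 + y ^ 2 := by nlinarith [sq_nonneg (x - y)]
          have e3 : 2 * (x * y) * y ^ 2 ≤ (x ^ 2 + y ^ 2) * y ^ 2 := by gcongr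
          have e4 : y ^ 2 * y ^ 2 ≤ 4 * 4 := by gcongr
          nlinarith
        calc _ ≤ qq d β a L * (x ^ 4 + 40 * x ^ 2 + 48 + 4 * x ^ 3 * y) := by gcongr
          _ = _ := by ring
      refine (Finset.sum_le_sum h1).trans ?_
      rw [Finset.sum_add_distrib, ← Finset.mul_sum, ← Finset.sum_mul, sum_qq β hS hd hL.2,
        sum_y hS hd hL]
      linarith
    rw [EE_add, EE_add, EE_smul, EE_const hS hd hβ] at h
    have h2 := EE_Mt_sq_le hS hd hβ hinc n
    have hn : (0 : ℝ) ≤ n := by positivity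
    push_cast
    nlinarith

lemma Vt_nonneg (hd : 3 ≤ d) (hβ : |β| ≤ 1 / (2 * d)) (L : List G) : 0 ≤ Vt S d β inc L := by
  refine Finset.sum_nonneg fun a _ => ?_
  have hq : 0 ≤ qq d β a L := le_trans (by positivity) (qq_lower hd hβ a L)
  positivity

lemma Vt_good (hS : S.card = d) (hd : 3 ≤ d) (hβ : |β| ≤ 1 / (2 * d))
    (hinc : ∀ L, ∀ a ∈ S, |inc a L| ≤ 1)
    (hsum : ∀ L, (d : ℝ) - 2 ≤ ∑ a ∈ S, inc a L) {L : List G} {b : G} (hb : b ∈ S)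
    (hbL : inc b L = -1) : 1 / (d : ℝ) ≤ Vt S d β inc L := by
  have hd3 : (3 : ℝ) ≤ d := by exact_mod_cast hd
  obtain ⟨a, ha, hab⟩ : ∃ a ∈ S, a ≠ b := by
    apply Finset.exists_mem_ne
    omega
  have ha1 : 1 ≤ inc a L := by
    have h1 : ∑ c ∈ S, (1 - inc c L) ≤ 2 := by
      rw [Finset.sum_sub_distrib, Finset.sum_const, hS]
      simp only [nsmul_eq_mul, mul_one]
      linarith [hsum L]
    have h2 : ∑ c ∈ ({a, b} : Finset G), (1 - inc c L) ≤ ∑ c ∈ S, (1 - inc c L) := by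
      refine Finset.sum_le_sum_of_subset_of_nonneg ?_ ?_
      · intro c hc
        rcases Finset.mem_insert.1 hc with rfl | hc
        · exact ha
        · rw [Finset.mem_singleton.1 hc]; exact hb
      · intro c hc _
        linarith [(abs_le.1 (hinc L c hc)).2]
    rw [Finset.sum_pair hab, hbL] at h2
    linarith
  have ha2 : inc a L = 1 := le_antisymm (abs_le.1 (hinc L a ha)).2 ha1
  have h2 : ∑ c ∈ ({a, b} : Finset G), qq d β c L * (inc c L - Gd S d β inc L) ^ 2 ≤
      Vt S d β inc L := by
    refine Finset.sum_le_sum_of_subset_of_nonneg ?_ ?_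
    · intro c hc
      rcases Finset.mem_insert.1 hc with rfl | hc
      · exact ha
      · rw [Finset.mem_singleton.1 hc]; exact hb
    · intro c hc _
      have hq : 0 ≤ qq d β c L := le_trans (by positivity) (qq_lower hd hβ c L)
      positivity
  refine le_trans ?_ h2
  rw [Finset.sum_pair hab, ha2, hbL]
  set g := Gd S d β inc L
  have e1 : 1 / (2 * (d : ℝ)) * (1 - g) ^ 2 ≤ qq d β a L * (1 - g) ^ 2 := by
    gcongr; exact qq_lower hd hβ a L
  have e2 : 1 / (2 * (d : ℝ)) * (-1 - g) ^ 2 ≤ qq d β b L * (-1 - g) ^ 2 := by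
    gcongr; exact qq_lower hd hβ b L
  have e3 : 1 / (2 * (d : ℝ)) * (1 - g) ^ 2 + 1 / (2 * (d : ℝ)) * (-1 - g) ^ 2
      = 1 / d + g ^ 2 / d := by field_simp; ring
  have e4 : 0 ≤ g ^ 2 / (d : ℝ) := by positivity
  linarith

lemma EE_Vt_pair (hS : S.card = d) (hd : 3 ≤ d) (hβ : |β| ≤ 1 / (2 * d))
    (hinc : ∀ L, ∀ a ∈ S, |inc a L| ≤ 1)
    (hsum : ∀ L, (d : ℝ) - 2 ≤ ∑ a ∈ S, inc a L)
    (hgood : ∀ L, (∃ b ∈ S, inc b L = -1) ∨ ∀ a ∈ S, ∃ b ∈ S, inc b (a :: L) = -1) (n : ℕ) :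
    1 / (d : ℝ) ≤ EE S d β n (Vt S d β inc) + EE S d β (n + 1) (Vt S d β inc) := by
  rw [EE, ← EE_add, ← EE_const hS hd hβ n (1 / (d : ℝ))]
  refine EE_mono hd hβ n fun L hL => ?_
  rcases hgood L with ⟨b, hb, h⟩ | h
  · have h1 := Vt_good hS hd hβ hinc hsum hb h
    have h2 : 0 ≤ ∑ a ∈ S, qq d β a L * Vt S d β inc (a :: L) := by
      refine Finset.sum_nonneg fun a _ => ?_
      have hq : 0 ≤ qq d β a L := le_trans (by positivity) (qq_lower hd hβ a L)
      exact mul_nonneg hq (Vt_nonneg hd hβ _)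
    linarith
  · have h1 : ∑ a ∈ S, qq d β a L * (1 / d) ≤ ∑ a ∈ S, qq d β a L * Vt S d β inc (a :: L) := by
      refine Finset.sum_le_sum fun a ha => ?_
      have hq : 0 ≤ qq d β a L := le_trans (by positivity) (qq_lower hd hβ a L)
      obtain ⟨b, hb, hbL⟩ := h a ha
      exact mul_le_mul_of_nonneg_left (Vt_good hS hd hβ hinc hsum hb hbL) hq
    rw [← Finset.sum_mul, sum_qq β hS hd hL.2, one_mul] at h1
    have := Vt_nonneg (S := S) (inc := inc) hd hβ L
    linarith

lemma EE_Mt_sq_ge (hS : S.card = d) (hd : 3 ≤ d) (hβ : |β| ≤ 1 / (2 * d))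
    (hinc : ∀ L, ∀ a ∈ S, |inc a L| ≤ 1)
    (hsum : ∀ L, (d : ℝ) - 2 ≤ ∑ a ∈ S, inc a L)
    (hgood : ∀ L, (∃ b ∈ S, inc b L = -1) ∨ ∀ a ∈ S, ∃ b ∈ S, inc b (a :: L) = -1) :
    ∀ n : ℕ, ((n : ℝ) - 1) / (2 * d) ≤ EE S d β n (fun L => Mt S d β inc L ^ 2)
  | 0 => by
    simp only [EE, Mt]
    have : (0 : ℝ) ≤ 1 / (2 * d) := by positivity
    have e : (((0 : ℕ) : ℝ) - 1) / (2 * d) = - (1 / (2 * d)) := by push_cast; ring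
    rw [e]; linarith [this]
  | 1 => by
    have : EE S d β 1 (fun _ => (0 : ℝ)) ≤ EE S d β 1 (fun L => Mt S d β inc L ^ 2) :=
      EE_mono hd hβ 1 fun L _ => by positivity
    rw [EE_const hS hd hβ] at this
    simpa using this
  | n + 2 => by
    have ih := EE_Mt_sq_ge hS hd hβ hinc hsum hgood n
    rw [EE_Mt_sq_eq hS hd hβ, EE_Mt_sq_eq hS hd hβ]
    have h := EE_Vt_pair hS hd hβ hinc hsum hgood n
    have hd0 : (d : ℝ) ≠ 0 := by positivity
    have e : (((n + 2 : ℕ) : ℝ) - 1) / (2 * d) = ((n : ℝ) - 1) / (2 * d) + 1 / d := by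
      push_cast; field_simp; ring
    rw [e]; linarith

lemma EE_Mt_abs (hS : S.card = d) (hd : 3 ≤ d) (hβ : |β| ≤ 1 / (2 * d))
    (hinc : ∀ L, ∀ a ∈ S, |inc a L| ≤ 1)
    (hsum : ∀ L, (d : ℝ) - 2 ≤ ∑ a ∈ S, inc a L)
    (hgood : ∀ L, (∃ b ∈ S, inc b L = -1) ∨ ∀ a ∈ S, ∃ b ∈ S, inc b (a :: L) = -1)
    (n : ℕ) (hn : 2 ≤ n) :
    1 / (224 * (d : ℝ) ^ 2) * √(n : ℝ) ≤ EE S d β n (fun L => |Mt S d β inc L|) := by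
  have hd3 : (3 : ℝ) ≤ d := by exact_mod_cast hd
  have hn2 : (2 : ℝ) ≤ n := by exact_mod_cast hn
  obtain ⟨s, hs0, hs⟩ : ∃ s : ℝ, 0 < s ∧ (n : ℝ) = s ^ 2 :=
    ⟨√n, Real.sqrt_pos.2 (by linarith), (Real.sq_sqrt (by linarith)).symm⟩
  have hsq : √(n : ℝ) = s := by rw [hs, Real.sqrt_sq hs0.le]
  rw [hsq]
  set t : ℝ := 28 * d * s with ht
  have ht0 : 0 < t := by positivity
  have h1 : EE S d β n (fun L => 1 / t * Mt S d β inc L ^ 2 + (-(1 / t ^ 3)) * Mt S d β inc L ^ 4) ≤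
      EE S d β n (fun L => |Mt S d β inc L|) := by
    refine EE_mono hd hβ n fun L _ => ?_
    have hx : Mt S d β inc L ^ 4 = |Mt S d β inc L| ^ 4 := by
      rw [← abs_pow, abs_of_nonneg (by positivity)]
    rw [hx, ← sq_abs]
    have hx0 := abs_nonneg (Mt S d β inc L)
    set x := |Mt S d β inc L|
    have e : x - (1 / t * x ^ 2 + (-(1 / t ^ 3)) * x ^ 4)
        = x * (t ^ 3 - t ^ 2 * x + x ^ 3) / t ^ 3 := by field_simp; ring
    have h2 : 0 ≤ t ^ 3 - t ^ 2 * x + x ^ 3 := by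
      rcases le_total x t with h | h
      · have : 0 ≤ t ^ 2 * (t - x) := mul_nonneg (by positivity) (by linarith)
        have : 0 ≤ x ^ 3 := by positivity
        nlinarith
      · have : 0 ≤ x * (x ^ 2 - t ^ 2) := mul_nonneg hx0 (by nlinarith)
        have : 0 ≤ t ^ 3 := by positivity
        nlinarith
    have h3 : 0 ≤ x * (t ^ 3 - t ^ 2 * x + x ^ 3) / t ^ 3 := by positivity
    linarith
  refine le_trans ?_ h1
  rw [EE_add, EE_smul, EE_smul]
  have h2 := EE_Mt_sq_ge hS hd hβ hinc hsum hgood n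
  have h4 := EE_Mt_four_le hS hd hβ hinc n
  have h2' : s ^ 2 / (4 * d) ≤ EE S d β n (fun L => Mt S d β inc L ^ 2) := by
    refine le_trans ?_ h2
    rw [← hs, div_le_div_iff₀ (by positivity) (by positivity)]
    nlinarith
  have h5 : 1 / t * (s ^ 2 / (4 * d)) ≤ 1 / t * EE S d β n (fun L => Mt S d β inc L ^ 2) := by
    gcongr
  have h6 : 1 / t ^ 3 * EE S d β n (fun L => Mt S d β inc L ^ 4) ≤ 1 / t ^ 3 * (96 * (s ^ 2) ^ 2) := by
    rw [← hs]; gcongr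
  have h7 : 1 / t * (s ^ 2 / (4 * d)) = 2 * (1 / (224 * (d : ℝ) ^ 2) * s) := by
    rw [ht]; field_simp; norm_num
  have h8 : 1 / t ^ 3 * (96 * (s ^ 2) ^ 2) ≤ 1 / (224 * (d : ℝ) ^ 2) * s := by
    have e : 1 / t ^ 3 * (96 * (s ^ 2) ^ 2) = 96 / (28 ^ 3 * d) * (1 / (d : ℝ) ^ 2 * s) := by
      rw [ht]; field_simp
    have e' : 1 / (224 * (d : ℝ) ^ 2) * s = 1 / 224 * (1 / (d : ℝ) ^ 2 * s) := by
      field_simp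
    rw [e, e']
    gcongr ?_ * _
    rw [div_le_div_iff₀ (by positivity) (by positivity)]
    linarith
  linarith

lemma EE_Rt_abs (hS : S.card = d) (hd : 3 ≤ d) (hβ : |β| ≤ 1 / (2 * d))
    (hinc : ∀ L, ∀ a ∈ S, |inc a L| ≤ 1) (n : ℕ) :
    EE S d β n (fun L => |Rt S d inc L|) ≤ 4 * d * √(n : ℝ) := by
  induction n with
  | zero => simp [EE, Rt]
  | succ n ih =>
    have h : EE S d β (n + 1) (fun L => |Rt S d inc L|) ≤
        EE S d β n (fun L => |Rt S d inc L| + ∑ b ∈ S, |Dv d b L| / n) := by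
      rw [EE]
      refine EE_mono hd hβ n fun L hL => ?_
      have h1 : |∑ a ∈ S, Dv d a L / L.length * inc a L| ≤ ∑ b ∈ S, |Dv d b L| / n := by
        refine (Finset.abs_sum_le_sum_abs _ _).trans (Finset.sum_le_sum fun a ha => ?_)
        rw [abs_mul, abs_div, hL.1, Nat.abs_cast]
        exact mul_le_of_le_one_right (by positivity) (hinc L a ha)
      simp only [Rt]
      rw [← Finset.sum_mul, sum_qq β hS hd hL.2, one_mul]
      exact (abs_add_le _ _).trans (by linarith)
    rw [EE_add, EE_sum] at h
    rcases Nat.eq_zero_or_pos n with rfl | hn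
    · have hd0 : (0 : ℝ) ≤ d := by positivity
      simp [EE, Rt]
    · have h2 : ∑ b ∈ S, EE S d β n (fun L => |Dv d b L| / n) ≤ ∑ b ∈ S, 3 / 2 / √(n : ℝ) :=
        Finset.sum_le_sum fun b hb => EE_Dv_abs hS hd hβ hb n hn
      rw [Finset.sum_const, hS, nsmul_eq_mul] at h2
      have hn' : (1 : ℝ) ≤ n := by exact_mod_cast hn
      have key : 3 / 2 / √(n : ℝ) ≤ 4 * (√((n : ℝ) + 1) - √(n : ℝ)) := by
        have hu : 0 < √(n : ℝ) := Real.sqrt_pos.2 (by linarith)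
        have hu2 : √(n : ℝ) ^ 2 = n := Real.sq_sqrt (by linarith)
        have hv2 : √((n : ℝ) + 1) ^ 2 = n + 1 := Real.sq_sqrt (by linarith)
        have hv : 0 < √((n : ℝ) + 1) := Real.sqrt_pos.2 (by linarith)
        set u := √(n : ℝ)
        set v := √((n : ℝ) + 1)
        have hvu : v ≤ 3 / 2 * u := by
          refine le_of_sq_le_sq ?_ (by positivity)
          nlinarith
        rw [div_le_iff₀ hu]
        have : (v - u) * (v + u) = 1 := by nlinarith
        have hpos : 0 ≤ v - u := by
          by_contra hc
          push Not at hc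
          nlinarith
        nlinarith
      have h3 : (d : ℝ) * (3 / 2 / √(n : ℝ)) ≤ d * (4 * (√((n : ℝ) + 1) - √(n : ℝ))) := by
        gcongr
      push_cast
      nlinarith

lemma Bt_nonneg (hsum : ∀ L, (d : ℝ) - 2 ≤ ∑ a ∈ S, inc a L) (L : List G) :
    0 ≤ Bt S d inc L := by
  induction L with
  | nil => simp [Bt]
  | cons a L ih =>
    have : 0 ≤ ((∑ a ∈ S, inc a L) - ((d : ℝ) - 2)) / d :=
      div_nonneg (by linarith [hsum L]) (by positivity)
    simp only [Bt]; linarith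

lemma EE_Zt_abs (hS : S.card = d) (hd : 3 ≤ d) (hβ : |β| ≤ 1 / (3584 * (d : ℝ) ^ 3))
    (hinc : ∀ L, ∀ a ∈ S, |inc a L| ≤ 1)
    (hsum : ∀ L, (d : ℝ) - 2 ≤ ∑ a ∈ S, inc a L)
    (hgood : ∀ L, (∃ b ∈ S, inc b L = -1) ∨ ∀ a ∈ S, ∃ b ∈ S, inc b (a :: L) = -1)
    (n : ℕ) (hn : 2 ≤ n) :
    1 / (896 * (d : ℝ) ^ 2) * √(n : ℝ) ≤ EE S d β n (fun L => |Zt d inc L|) := by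
  have hd3 : (3 : ℝ) ≤ d := by exact_mod_cast hd
  have hβ1 : |β| ≤ 1 / (2 * d) := by
    refine hβ.trans ?_
    gcongr
    · norm_num
    · exact le_self_pow₀ (by linarith) (by norm_num)
  have h1 : EE S d β n (fun L => (|Mt S d β inc L| + Mt S d β inc L)
      + (-(2 * |β|)) * |Rt S d inc L|) ≤ EE S d β n (fun L => 2 * |Zt d inc L|) := by
    refine EE_mono hd hβ1 n fun L _ => ?_
    rw [Zt_eq S d β inc hd L]
    have hB := Bt_nonneg (S := S) (d := d) (inc := inc) hsum L
    set M := Mt S d β inc L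
    set B := Bt S d inc L
    have hR : |β * Rt S d inc L| = |β| * |Rt S d inc L| := abs_mul _ _
    set T := β * Rt S d inc L
    have e1 := le_abs_self (M + B + T)
    have e2 : |M| ≤ |M + B + T| + B + |T| := by
      have : M = (M + B + T) - B - T := by ring
      calc |M| = |(M + B + T) - B - T| := by rw [← this]
        _ ≤ |(M + B + T) - B| + |T| := abs_sub _ _
        _ ≤ |M + B + T| + |B| + |T| := by gcongr; exact abs_sub _ _
        _ = _ := by rw [abs_of_nonneg hB]
    have e3 := neg_abs_le T
    linarith
  rw [EE_add, EE_add, EE_smul, EE_smul, EE_Mt hS hd hβ1] at h1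
  have h2 := EE_Mt_abs hS hd hβ1 hinc hsum hgood n hn
  have h3 := EE_Rt_abs hS hd hβ1 hinc n
  have h4 : 2 * |β| * EE S d β n (fun L => |Rt S d inc L|) ≤
      2 * (1 / (3584 * (d : ℝ) ^ 3)) * (4 * d * √(n : ℝ)) := by
    have h0 : EE S d β n (fun _ => (0 : ℝ)) ≤ EE S d β n (fun L => |Rt S d inc L|) :=
      EE_mono hd hβ1 n fun L _ => abs_nonneg _
    rw [EE_const hS hd hβ1] at h0
    gcongr
  have h5 : 2 * (1 / (3584 * (d : ℝ) ^ 3)) * (4 * d * √(n : ℝ))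
      = 1 / 448 * (1 / (d : ℝ) ^ 2 * √(n : ℝ)) := by
    field_simp; norm_num
  have h6 : 1 / (224 * (d : ℝ) ^ 2) * √(n : ℝ) = 1 / 224 * (1 / (d : ℝ) ^ 2 * √(n : ℝ)) := by
    field_simp
  have h7 : 1 / (896 * (d : ℝ) ^ 2) * √(n : ℝ) = 1 / 896 * (1 / (d : ℝ) ^ 2 * √(n : ℝ)) := by
    field_simp
  rw [h7]
  linarith

end walk

end ERWaux

namespace ERWaux

open Finset

section graph
variable {G : Type*} [Group G] [DecidableEq G] {S : Finset G}

lemma adj_mul (h1 : (1 : G) ∉ S) {a : G} (ha : a ∈ S) (x : G) :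
    (cayleyGraph S).Adj (a * x) x := by
  refine ⟨?_, Or.inr ?_⟩
  · intro h
    have : a = 1 := by simpa using h
    exact h1 (this ▸ ha)
  · simpa using ha

/-- in a tree, at most one neighbour of `x` is not further from the root than `x`. -/
lemma tree_unique {V : Type*} [DecidableEq V] {Γ : SimpleGraph V} (hT : Γ.IsTree) (o x y z : V)
    (hy : Γ.Adj y x) (hz : Γ.Adj z x) (hyd : Γ.dist o y ≤ Γ.dist o x)
    (hzd : Γ.dist o z ≤ Γ.dist o x) : y = z := by
  have key : ∀ y, Γ.Adj y x → Γ.dist o y ≤ Γ.dist o x →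
      ∃ w : Γ.Walk o x, w.IsPath ∧ w.penultimate = y := by
    intro y hy hyd
    obtain ⟨w, hw, hl⟩ := (hT.connected o y).exists_path_of_dist
    have hx : x ∉ w.support := by
      intro hx
      have h1 := SimpleGraph.dist_le (w.takeUntil x hx)
      have h2 := w.length_takeUntil_lt hx hy.ne'
      omega
    exact ⟨w.concat hy, hw.concat hx hy, by simp⟩
  obtain ⟨w, hw, h1⟩ := key y hy hyd
  obtain ⟨w', hw', h2⟩ := key z hz hzd
  have := hT.IsAcyclic.path_unique ⟨w, hw⟩ ⟨w', hw'⟩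
  have h3 : w = w' := congrArg Subtype.val this
  rw [← h1, ← h2, h3]

/-- increment of the distance. -/
def dinc (S : Finset G) (a : G) (L : List G) : ℝ :=
  ((cayleyGraph S).dist 1 (a * L.prod) : ℝ) - ((cayleyGraph S).dist 1 L.prod : ℝ)

lemma dinc_abs (h1 : (1 : G) ∉ S) (hT : (cayleyGraph S).IsTree) (L : List G) (a : G)
    (ha : a ∈ S) : |dinc S a L| ≤ 1 := by
  have hadj := adj_mul h1 ha L.prod
  have e1 : (cayleyGraph S).dist 1 (a * L.prod) ≤ (cayleyGraph S).dist 1 L.prod + 1 := by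
    have := hT.connected.dist_triangle (u := 1) (v := L.prod) (w := a * L.prod)
    rwa [SimpleGraph.dist_eq_one_iff_adj.2 hadj.symm] at this
  have e2 : (cayleyGraph S).dist 1 L.prod ≤ (cayleyGraph S).dist 1 (a * L.prod) + 1 := by
    have := hT.connected.dist_triangle (u := 1) (v := a * L.prod) (w := L.prod)
    rwa [SimpleGraph.dist_eq_one_iff_adj.2 hadj] at this
  have e1' : ((cayleyGraph S).dist 1 (a * L.prod) : ℝ) ≤ (cayleyGraph S).dist 1 L.prod + 1 := by
    exact_mod_cast e1
  have e2' : ((cayleyGraph S).dist 1 L.prod : ℝ) ≤ (cayleyGraph S).dist 1 (a * L.prod) + 1 := by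
    exact_mod_cast e2
  rw [dinc, abs_le]
  constructor <;> linarith

lemma dinc_sum {d : ℕ} (hS : S.card = d) (h1 : (1 : G) ∉ S)
    (hT : (cayleyGraph S).IsTree) (L : List G) : (d : ℝ) - 2 ≤ ∑ a ∈ S, dinc S a L := by
  have key : ∀ a ∈ S, (cayleyGraph S).dist 1 L.prod < (cayleyGraph S).dist 1 (a * L.prod) →
      1 ≤ dinc S a L := by
    intro a _ h
    have : ((cayleyGraph S).dist 1 L.prod : ℝ) + 1 ≤ (cayleyGraph S).dist 1 (a * L.prod) := by
      exact_mod_cast h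
    rw [dinc]; linarith
  by_cases h : ∃ b ∈ S, (cayleyGraph S).dist 1 (b * L.prod) ≤ (cayleyGraph S).dist 1 L.prod
  · obtain ⟨b, hb, hbd⟩ := h
    have h2 : ∑ a ∈ S, ((1 : ℝ) - if a = b then 2 else 0) ≤ ∑ a ∈ S, dinc S a L := by
      refine Finset.sum_le_sum fun a ha => ?_
      split_ifs with hab
      · have := (abs_le.1 (dinc_abs h1 hT L a ha)).1
        linarith
      · rw [sub_zero]
        refine key a ha ?_
        by_contra hc
        push Not at hc
        exact hab (mul_right_cancel (tree_unique hT 1 L.prod _ _ (adj_mul h1 ha _)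
          (adj_mul h1 hb _) hc hbd))
    rw [Finset.sum_sub_distrib, Finset.sum_ite_eq' S b, if_pos hb, Finset.sum_const, hS] at h2
    simpa using h2
  · push Not at h
    have h2 : ∑ a ∈ S, (1 : ℝ) ≤ ∑ a ∈ S, dinc S a L :=
      Finset.sum_le_sum fun a ha => key a ha (h a ha)
    rw [Finset.sum_const, hS] at h2
    simp only [nsmul_eq_mul, mul_one] at h2
    linarith

lemma dinc_back (hsymm : ∀ s ∈ S, s⁻¹ ∈ S)
    (hT : (cayleyGraph S).IsTree) (L : List G) (hL : L.prod ≠ 1) : ∃ b ∈ S, dinc S b L = -1 := by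
  obtain ⟨w, hw⟩ := (hT.connected L.prod 1).exists_walk_length_eq_dist
  generalize hx : L.prod = x at w hw hL
  cases w with
  | nil => exact absurd rfl hL
  | @cons _ y _ hadj w' =>
    have hy : y * x⁻¹ ∈ S := by
      rcases hadj.2 with h | h
      · exact h
      · simpa using hsymm _ h
    refine ⟨y * x⁻¹, hy, ?_⟩
    rw [SimpleGraph.Walk.length_cons] at hw
    have e1 := SimpleGraph.dist_le w'
    have e2 : (cayleyGraph S).dist x 1 ≤ (cayleyGraph S).dist y 1 + 1 := by
      have := hT.connected.dist_triangle (u := x) (v := y) (w := 1)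
      rw [SimpleGraph.dist_eq_one_iff_adj.2 hadj] at this
      omega
    have e3 : (cayleyGraph S).dist x 1 = (cayleyGraph S).dist y 1 + 1 := by omega
    simp only [dinc, hx, inv_mul_cancel_right]
    rw [SimpleGraph.dist_comm (u := 1) (v := x), SimpleGraph.dist_comm (u := 1) (v := y), e3]
    push_cast; ring

lemma dinc_good (hsymm : ∀ s ∈ S, s⁻¹ ∈ S) (h1 : (1 : G) ∉ S)
    (hT : (cayleyGraph S).IsTree) (L : List G) :
    (∃ b ∈ S, dinc S b L = -1) ∨ ∀ a ∈ S, ∃ b ∈ S, dinc S b (a :: L) = -1 := by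
  by_cases hL : L.prod = 1
  · right
    intro a ha
    refine dinc_back hsymm hT _ ?_
    rw [List.prod_cons, hL, mul_one]
    intro h
    exact h1 (h ▸ ha)
  · left
    exact dinc_back hsymm hT L hL

lemma Zt_dinc (d : ℕ) (L : List G) :
    Zt d (dinc S) L =
      ((cayleyGraph S).dist 1 L.prod : ℝ) - L.length * (((d : ℝ) - 2) / d) := by
  induction L with
  | nil => simp [Zt]
  | cons a L ih =>
    simp only [Zt, ih, dinc, List.prod_cons, List.length_cons]
    push_cast; ring

end graph

section meas
variable {G : Type*} [Group G] [DecidableEq G] {d : ℕ} {p : ℝ}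
  {Ω : Type*} [MeasurableSpace Ω] {P : Measure Ω}

/-- history of the walk as a word. -/
def hist (E : ERW G d p Ω P) : ℕ → Ω → List G
  | 0, _ => []
  | n + 1, ω => E.g (n + 1) ω :: hist E n ω

lemma hist_prod (E : ERW G d p Ω P) (n : ℕ) (ω : Ω) : (hist E n ω).prod = E.pos n ω := by
  induction n with
  | zero => rfl
  | succ n ih => simp [hist, ERW.pos, ih]

lemma hist_word (E : ERW G d p Ω P) (n : ℕ) (ω : Ω) : Word E.S n (hist E n ω) := by
  induction n with
  | zero => exact ⟨rfl, by simp [hist]⟩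
  | succ n ih => exact ih.cons (E.mem_S _ (by omega) ω)

lemma hist_count (E : ERW G d p Ω P) (n : ℕ) (ω : Ω) (a : G) :
    ((Finset.Icc 1 n).filter fun k => E.g k ω = a).card = (hist E n ω).count a := by
  induction n with
  | zero => simp [hist]
  | succ n ih =>
    rw [← Finset.insert_Icc_right_eq_Icc_add_one (by omega), Finset.filter_insert]
    simp only [hist, List.count_cons, beq_iff_eq]
    split_ifs with h
    · rw [Finset.card_insert_of_notMem (by simp), ih]
    · rw [ih, add_zero]

lemma hist_eq_iff (E : ERW G d p Ω P) (n : ℕ) (ω ω₀ : Ω) :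
    (∀ k ∈ Finset.Icc 1 n, E.g k ω = E.g k ω₀) ↔ hist E n ω = hist E n ω₀ := by
  induction n with
  | zero => simp [hist]
  | succ n ih =>
    simp only [hist, List.cons.injEq, ← ih, Finset.mem_Icc]
    constructor
    · intro h
      exact ⟨h _ ⟨by omega, le_rfl⟩, fun k hk => h k ⟨hk.1, by omega⟩⟩
    · rintro ⟨h1, h2⟩ k ⟨hk1, hk2⟩
      rcases Nat.lt_or_ge n k with h | h
      · have : k = n + 1 := by omega
        rw [this]; exact h1
      · exact h2 k ⟨hk1, h⟩

lemma hist_cons_set (E : ERW G d p Ω P) (n : ℕ) (a : G) (L : List G) :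
    {ω | hist E (n + 1) ω = a :: L} = {ω | hist E n ω = L} ∩ {ω | E.g (n + 1) ω = a} := by
  ext ω
  simp [hist, and_comm]

lemma hist_meas (E : ERW G d p Ω P) (n : ℕ) (L : List G) :
    MeasurableSet {ω | hist E n ω = L} := by
  induction n generalizing L with
  | zero => simp only [hist]; exact MeasurableSet.const _
  | succ n ih =>
    cases L with
    | nil => simp [hist]
    | cons a L =>
      rw [hist_cons_set]
      exact (ih L).inter (E.meas_g _ a)

lemma hist_update [IsProbabilityMeasure P] (hd : 3 ≤ d) (E : ERW G d p Ω P) (n : ℕ) (a : G)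
    (ha : a ∈ E.S) (L : List G) :
    P.real {ω | hist E (n + 1) ω = a :: L} =
      qq d ((p * d - 1) / (d - 1)) a L * P.real {ω | hist E n ω = L} := by
  have hd3 : (3 : ℝ) ≤ d := by exact_mod_cast hd
  by_cases hne : ∃ ω₀, hist E n ω₀ = L
  · obtain ⟨ω₀, rfl⟩ := hne
    rw [hist_cons_set]
    rcases Nat.eq_zero_or_pos n with rfl | hn
    · have := E.init a ha
      simp only [hist, Set.setOf_true, Set.univ_inter, qq, Dv]
      simp [Measure.real, this]
    · have h := E.update n hn (fun k => E.g k ω₀) a ha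
      simp only [hist_eq_iff, hist_count] at h
      simp only [Measure.real]
      rw [h]
      congr 1
      have hn' : (n : ℝ) ≠ 0 := by positivity
      have hd1 : (d : ℝ) - 1 ≠ 0 := by linarith
      have hd0 : (d : ℝ) ≠ 0 := by positivity
      rw [qq, Dv, (hist_word E n ω₀).1]
      field_simp
      ring
  · have h0 : {ω | hist E n ω = L} = ∅ := by
      ext ω; simpa using fun h => hne ⟨ω, h⟩
    rw [hist_cons_set, h0]
    simp

/-- all words of length `n`. -/
def words (S : Finset G) : ℕ → Finset (List G)
  | 0 => {[]}
  | n + 1 => (words S n).biUnion fun L => S.image fun a => a :: L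

lemma mem_words (S : Finset G) (n : ℕ) (L : List G) (h : Word S n L) : L ∈ words S n := by
  induction n generalizing L with
  | zero => simpa [words] using h.1
  | succ n ih =>
    cases L with
    | nil => exact absurd h.1 (by simp)
    | cons a L =>
      simp only [words, Finset.mem_biUnion, Finset.mem_image]
      refine ⟨L, ih L ⟨by simpa using h.1, fun x hx => h.2 x (List.mem_cons_of_mem _ hx)⟩, a,
        h.2 a List.mem_cons_self, rfl⟩

lemma EE_eq_sum [IsProbabilityMeasure P] (hd : 3 ≤ d) (E : ERW G d p Ω P) (n : ℕ)
    (Φ : List G → ℝ) :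
    EE E.S d ((p * d - 1) / (d - 1)) n Φ
      = ∑ L ∈ words E.S n, P.real {ω | hist E n ω = L} * Φ L := by
  induction n generalizing Φ with
  | zero => simp [EE, words, hist]
  | succ n ih =>
    rw [EE, ih, words, Finset.sum_biUnion]
    · refine Finset.sum_congr rfl fun L _ => ?_
      rw [Finset.sum_image (by intro x _ y _ h; simpa using h), Finset.mul_sum]
      refine Finset.sum_congr rfl fun a ha => ?_
      rw [hist_update hd E n a ha]
      ring
    · intro L _ L' _ hne
      rw [Function.onFun, Finset.disjoint_left]
      intro x hx hx'
      obtain ⟨a, _, rfl⟩ := Finset.mem_image.1 hx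
      obtain ⟨b, _, hb⟩ := Finset.mem_image.1 hx'
      exact hne (by simpa using (List.cons.inj hb).2.symm)

lemma integral_hist [IsProbabilityMeasure P] (hd : 3 ≤ d) (E : ERW G d p Ω P) (n : ℕ)
    (Φ : List G → ℝ) :
    ∫ ω, Φ (hist E n ω) ∂P = EE E.S d ((p * d - 1) / (d - 1)) n Φ := by
  have h : (fun ω => Φ (hist E n ω)) =
      fun ω => ∑ L ∈ words E.S n, ({ω | hist E n ω = L}.indicator (fun _ => Φ L)) ω := by
    funext ω
    simp only [Set.indicator_apply, Set.mem_setOf_eq]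
    rw [Finset.sum_ite_eq, if_pos (mem_words _ _ _ (hist_word E n ω))]
  rw [h, integral_finset_sum, EE_eq_sum hd]
  · refine Finset.sum_congr rfl fun L _ => ?_
    rw [integral_indicator_const _ (hist_meas E n L), smul_eq_mul]
  · intro L _
    exact (integrable_const _).indicator (hist_meas E n L)

end meas

/-- passing from the first moment to the `m`-th moment. -/
lemma EE_rpow {G : Type*} [DecidableEq G] {S : Finset G} {d : ℕ} {β : ℝ} (hS : S.card = d)
    (hd : 3 ≤ d) (hβ : |β| ≤ 1 / (2 * d)) {m : ℝ} (hm : 1 ≤ m) (n : ℕ) (Φ : List G → ℝ)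
    {t : ℝ} (ht : 0 < t) (h : t ≤ EE S d β n (fun L => |Φ L|)) :
    t ^ m ≤ EE S d β n (fun L => |Φ L| ^ m) := by
  have h1 : EE S d β n (fun L => t ^ m * (m / t) * |Φ L| + t ^ m * (1 - m)) ≤
      EE S d β n (fun L => |Φ L| ^ m) := by
    refine EE_mono hd hβ n fun L _ => ?_
    have hb := one_add_mul_self_le_rpow_one_add (s := |Φ L| / t - 1)
      (by have : 0 ≤ |Φ L| / t := by positivity
          linarith) hm
    rw [add_sub_cancel, Real.div_rpow (abs_nonneg _) ht.le, le_div_iff₀ (by positivity)] at hb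
    refine le_trans (le_of_eq ?_) hb
    ring
  refine le_trans ?_ h1
  rw [EE_add, EE_smul, EE_const hS hd hβ]
  have h2 : t ^ m * (m / t) * t ≤ t ^ m * (m / t) * EE S d β n (fun L => |Φ L|) := by
    gcongr
  have h3 : t ^ m * (m / t) * t = t ^ m * m := by field_simp
  linarith

end ERWaux

/-- matching lower bound in a neighbourhood of `1/d`: for any
`m ∈ [1,2)` there is `ε > 0` such that for all memory parameters
`p ∈ (1/d - ε, 1/d + ε)` there is `c > 0` with
`E|Δ n / n - (d-2)/d|^m ≥ c * n^(-m/2)` for all `n ≥ 1`. -/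
theorem erw_rate_lower
    {G : Type*} [Group G] [DecidableEq G] {Ω : Type*} [MeasurableSpace Ω]
    {P : Measure Ω} [IsProbabilityMeasure P]
    (d : ℕ) (hd : 3 ≤ d) (m : ℝ) (hm1 : 1 ≤ m) (hm2 : m < 2) :
    ∃ ε : ℝ, 0 < ε ∧ ∀ p : ℝ, 1 / (d : ℝ) - ε < p → p < 1 / (d : ℝ) + ε →
      ∀ E : ERW G d p Ω P, ∃ c : ℝ, 0 < c ∧ ∀ n : ℕ, 1 ≤ n →
        c * (n : ℝ) ^ (-(m / 2)) ≤
          ∫ ω, |(E.dist n ω : ℝ) / n - ((d : ℝ) - 2) / d| ^ m ∂P := by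
  have hd3 : (3 : ℝ) ≤ d := by exact_mod_cast hd
  have hd0 : (0 : ℝ) < d := by linarith
  refine ⟨1 / (8000 * (d : ℝ) ^ 3), by positivity, ?_⟩
  intro p hp1 hp2 E
  set β : ℝ := (p * d - 1) / (d - 1) with hβdef
  have hβ : |β| ≤ 1 / (3584 * (d : ℝ) ^ 3) := by
    have e1 : β = (p - 1 / d) * (d / (d - 1)) := by
      have : (d : ℝ) - 1 ≠ 0 := by linarith
      rw [hβdef]; field_simp
    have e2 : |p - 1 / d| ≤ 1 / (8000 * (d : ℝ) ^ 3) := by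
      rw [abs_le]; constructor <;> linarith
    have e3 : (d : ℝ) / (d - 1) ≤ 2 := by
      rw [div_le_iff₀ (by linarith)]; linarith
    have e4 : (0 : ℝ) ≤ d / (d - 1) := div_nonneg hd0.le (by linarith)
    rw [e1, abs_mul, abs_of_nonneg e4]
    calc _ ≤ 1 / (8000 * (d : ℝ) ^ 3) * 2 := by gcongr
      _ = 1 / (4000 * (d : ℝ) ^ 3) := by field_simp; norm_num
      _ ≤ _ := by gcongr; norm_num
  have hβ1 : |β| ≤ 1 / (2 * d) := by
    refine hβ.trans ?_
    gcongr
    · norm_num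
    · exact le_self_pow₀ (by linarith) (by norm_num)
  set t : ℝ := 1 / (896 * (d : ℝ) ^ 2) with ht
  have ht0 : 0 < t := by positivity
  refine ⟨t ^ m, by positivity, ?_⟩
  intro n hn
  have hn' : (0 : ℝ) < n := by exact_mod_cast hn
  have hs0 : 0 < √(n : ℝ) := Real.sqrt_pos.2 hn'
  have hss : √(n : ℝ) * √(n : ℝ) = n := Real.mul_self_sqrt hn'.le
  have hlhs : t ^ m * (n : ℝ) ^ (-(m / 2)) = (t / √(n : ℝ)) ^ m := by
    rw [Real.div_rpow ht0.le hs0.le, Real.sqrt_eq_rpow, ← Real.rpow_mul hn'.le,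
      Real.rpow_neg hn'.le, div_eq_mul_inv]
    congr 3
    ring
  let Φ : List G → ℝ := fun L =>
    ((cayleyGraph E.S).dist 1 L.prod : ℝ) / n - ((d : ℝ) - 2) / d
  have hint : ∫ ω, |(E.dist n ω : ℝ) / n - ((d : ℝ) - 2) / d| ^ m ∂P
      = ERWaux.EE E.S d β n (fun L => |Φ L| ^ m) := by
    rw [← ERWaux.integral_hist hd E n (fun L => |Φ L| ^ m)]
    simp only [Φ, ERWaux.hist_prod, ERW.dist]
  rw [hlhs, hint]
  refine ERWaux.EE_rpow E.card_S hd hβ1 hm1 n Φ (by positivity) ?_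
  have hinc := ERWaux.dinc_abs E.one_not_mem E.tree
  have hsum := ERWaux.dinc_sum E.card_S E.one_not_mem E.tree
  have hgood := ERWaux.dinc_good E.symm_S E.one_not_mem E.tree
  have hΦ : ERWaux.EE E.S d β n (fun L => |Φ L|)
      = 1 / n * ERWaux.EE E.S d β n (fun L => |ERWaux.Zt d (ERWaux.dinc E.S) L|) := by
    rw [← ERWaux.EE_smul]
    refine ERWaux.EE_congr hd hβ1 n fun L hL => ?_
    rw [ERWaux.Zt_dinc, hL.1, ← abs_of_pos (show (0 : ℝ) < 1 / n by positivity), ← abs_mul]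
    simp only [Φ]
    congr 1
    field_simp
  have hmain : t * √(n : ℝ) ≤
      ERWaux.EE E.S d β n (fun L => |ERWaux.Zt d (ERWaux.dinc E.S) L|) := by
    rcases Nat.lt_or_ge n 2 with h2 | h2
    · obtain rfl : n = 1 := by omega
      rw [← ERWaux.EE_const (S := E.S) E.card_S hd hβ1 1 (t * √((1 : ℕ) : ℝ))]
      refine ERWaux.EE_mono hd hβ1 1 fun L hL => ?_
      obtain ⟨a, rfl⟩ := List.length_eq_one_iff.1 hL.1
      have ha : a ∈ E.S := hL.2 a (by simp)
      have hadj := ERWaux.adj_mul E.one_not_mem ha 1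
      rw [mul_one] at hadj
      rw [ERWaux.Zt_dinc, List.prod_singleton, SimpleGraph.dist_eq_one_iff_adj.2 hadj.symm]
      refine le_trans ?_ (le_abs_self _)
      have e : ((1 : ℕ) : ℝ) - (([a] : List G).length : ℝ) * (((d : ℝ) - 2) / d) = 2 / d := by
        simp only [List.length_singleton, Nat.cast_one]; field_simp; ring
      rw [e, ht]
      simp only [Nat.cast_one, Real.sqrt_one, mul_one]
      rw [div_le_div_iff₀ (by positivity) hd0]
      nlinarith
    · exact ERWaux.EE_Zt_abs E.card_S hd hβ hinc hsum hgood n h2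
  rw [hΦ]
  calc t / √(n : ℝ) = 1 / n * (t * √(n : ℝ)) := by
        rw [div_eq_iff hs0.ne', mul_assoc, mul_assoc, hss]; field_simp
    _ ≤ _ := by gcongr

end
end
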